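/- Assume the curve setup with counterclockwise orientation and let a well distributed mesh with parameters κ ≥ 2 and M > 0 be given. Then there exist C > 0 and N₀ such that for every N ≥ N₀ and every z ∈ ℝ^N: ‖(L²/N²)·(B_N B̃_N − A_N Ã_N) z + π²·z‖_{ℓ²} + ‖(L²/N²)·(A_N B̃_N + B_N Ã_N) z‖_{ℓ²} ≤ (C/N)·‖z‖_{ℓ²}, and ‖(L²/N²)·(B̃_N B_N − Ã_N A_N) z + π²·z‖_{ℓ²} + ‖(L²/N²)·(Ã_N B_N + B̃_N A_N) z‖_{ℓ²} ≤ (C/N)·‖z‖_{ℓ²}. -/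

import Mathlib

open Real MeasureTheory

/-- Dot product of two points of the plane `ℝ² ≃ ℂ`. -/
noncomputable def dotR (z w : ℂ) : ℝ := z.re * w.re + z.im * w.im

/-- The unit normal vector `n(s) = (l₂'(s), -l₁'(s))` of a curve `l`. -/
noncomputable def normalv (l : ℝ → ℂ) (s : ℝ) : ℂ := -Complex.I * deriv l s

/-- The discretized double layer matrix. -/
noncomputable def Amat (l : ℝ → ℂ) {N : ℕ} (a b : Fin N → ℝ) : Matrix (Fin N) (Fin N) ℝ :=
  Matrix.of fun i j => dotR (l (a i) - l (b j)) (normalv l (a i)) / ‖l (a i) - l (b j)‖ ^ 2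

/-- The discretized singular (tangential) matrix. -/
noncomputable def Bmat (l : ℝ → ℂ) {N : ℕ} (a b : Fin N → ℝ) : Matrix (Fin N) (Fin N) ℝ :=
  Matrix.of fun i j => dotR (l (a i) - l (b j)) (deriv l (a i)) / ‖l (a i) - l (b j)‖ ^ 2

/-- The normalized `ℓ²` norm of a vector. -/
noncomputable def l2norm {N : ℕ} (z : Fin N → ℝ) : ℝ := Real.sqrt ((N : ℝ)⁻¹ * ∑ i, z i ^ 2)

/-!
Identify `ℝ²` with `ℂ`. Then `B + i A` is the matrix of the Cauchy kernel
`k(s, t) = l'(s) / (l(s) - l(t))`, and the two identities are the real and imaginary parts of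
`(L / N)² (B + i A) (B̃ + i Ã) ≈ -π²`.

After rescaling to period `2π`, dividing the chords of `l` by those of the unit circle gives a
smooth nowhere vanishing function, and `k` is the kernel of the circle plus the logarithmic
derivative of this quotient. The correction has mean zero in `s`: the quotient has winding number
zero, because seen from the rightmost point of a counterclockwise curve it avoids a ray. For the
circle and staggered equidistant nodes the sums are evaluated exactly by roots of unity; the smooth
correction is handled by the midpoint rule. Hence the sums of `(2π / N) k(u, t)` over the nodes `u`
are `πi + O(N⁻²)`.

Off the diagonal, `k(s, u) k(u, t) = k(s, t) (k(u, t) - k(u, s))` makes the entries of the product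
`O(N⁻²)`. On the diagonal, `∂ₜ k(s, t) = -k(s, t) k(t, s)` reduces the entries, up to `O(N⁻¹)`, to
those of the circle, which give `-π²`.
-/

open Set Filter Topology Function
open scoped ContDiff ComplexConjugate

section ParametricIntegral

universe u

theorem hasFDerivAt_intervalIntegral_of_continuous {E F : Type*} [NormedAddCommGroup E]
    [NormedSpace ℝ E] [NormedAddCommGroup F] [NormedSpace ℝ F] {H : E → ℝ → F}
    {H' : E → ℝ → E →L[ℝ] F} (hH : Continuous (uncurry H)) (hH' : Continuous (uncurry H'))
    (hderiv : ∀ x θ, HasFDerivAt (H · θ) (H' x θ) x) (a b : ℝ) (x₀ : E) :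
    HasFDerivAt (fun x => ∫ θ in a..b, H x θ) (∫ θ in a..b, H' x₀ θ) x₀ := by
  obtain ⟨C, hC⟩ := isCompact_uIcc.exists_bound_of_continuousOn (s := uIcc a b)
    (f := H' x₀) (hH'.uncurry_left x₀).continuousOn
  have hbound : ∀ᶠ x in 𝓝 x₀, ∀ θ ∈ uIcc a b, ‖H' x θ‖ ≤ C + 1 := by
    refine isCompact_uIcc.eventually_forall_of_forall_eventually fun θ hθ => ?_
    have hlt : ‖uncurry H' (x₀, θ)‖ < C + 1 := (hC θ hθ).trans_lt (lt_add_one C)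
    exact (hH'.norm.continuousAt.eventually_lt_const hlt).mono fun _ h => h.le
  refine intervalIntegral.hasFDerivAt_integral_of_dominated_of_fderiv_le
    (bound := fun _ => C + 1) hbound ?_ ((hH.uncurry_left x₀).intervalIntegrable _ _)
    (hH'.uncurry_left x₀).aestronglyMeasurable ?_ intervalIntegrable_const
    (.of_forall fun θ _ x _ => hderiv x θ)
  · exact .of_forall fun x => (hH.uncurry_left x).aestronglyMeasurable
  · exact .of_forall fun θ hθ x hx => hx θ (uIoc_subset_uIcc hθ)

/- `E` and `F` share a universe because the induction replaces `F` by `E →L[ℝ] F`. -/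
theorem contDiff_intervalIntegral {E : Type u} [NormedAddCommGroup E] [NormedSpace ℝ E] (n : ℕ) :
    ∀ {F : Type u} [NormedAddCommGroup F] [NormedSpace ℝ F] {H : E → ℝ → F},
      ContDiff ℝ n (uncurry H) → ∀ a b : ℝ, ContDiff ℝ n fun x => ∫ θ in a..b, H x θ := by
  induction n with
  | zero =>
    intro F _ _ H hH a b
    rw [CharP.cast_eq_zero, contDiff_zero] at hH ⊢
    exact intervalIntegral.continuous_parametric_intervalIntegral_of_continuous' hH a b
  | succ n ih =>
    intro F _ _ H hH a b
    push_cast at hH ⊢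
    obtain ⟨G, hG, hHG⟩ := contDiff_succ_iff_hasFDerivAt.1 hH
    have hpartial : ContDiff ℝ n (uncurry fun x θ => (G (x, θ)).comp (.inl ℝ E ℝ)) :=
      hG.clm_comp contDiff_const
    refine contDiff_succ_iff_hasFDerivAt.2 ⟨_, ih hpartial a b,
      hasFDerivAt_intervalIntegral_of_continuous hH.continuous hpartial.continuous ?_ a b⟩
    exact fun x θ => (hHG (x, θ)).comp (f := fun y => (y, θ)) x (hasFDerivAt_prodMk_left x θ)

theorem dslope_eq_integral_deriv {F : Type*} [NormedAddCommGroup F] [NormedSpace ℝ F]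
    [CompleteSpace F] {f : ℝ → F} (hf : ContDiff ℝ 1 f) (s t : ℝ) :
    dslope f s t = ∫ θ in (0 : ℝ)..1, deriv f (s + θ * (t - s)) := by
  rcases eq_or_ne t s with rfl | hts
  · simp only [dslope_same, sub_self, mul_zero, add_zero, intervalIntegral.integral_const, sub_zero,
      one_smul]
  have hderiv : Continuous (deriv f) := hf.continuous_deriv le_rfl
  have hFTC : (t - s) • ∫ θ in (0 : ℝ)..1, deriv f (s + θ • (t - s)) = f (s + (t - s)) - f s :=
    intervalIntegral.integral_unitInterval_deriv_eq_sub
      (hderiv.comp (by fun_prop)).continuousOn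
      fun _ _ => (hf.differentiable one_ne_zero _).hasDerivAt
  rw [add_sub_cancel, ← sub_smul_dslope] at hFTC
  exact (smul_right_injective F (sub_ne_zero.2 hts) hFTC).symm

theorem contDiff_uncurry_dslope {F : Type} [NormedAddCommGroup F] [NormedSpace ℝ F]
    [CompleteSpace F] {f : ℝ → F} {n : ℕ} (hf : ContDiff ℝ (n + 1) f) :
    ContDiff ℝ n (uncurry (dslope f)) := by
  have hderiv : ContDiff ℝ n (deriv f) := (contDiff_succ_iff_deriv.1 hf).2.2
  have hdslope : uncurry (dslope f) =
      fun p => ∫ θ in (0 : ℝ)..1, deriv f (p.1 + θ * (p.2 - p.1)) :=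
    funext fun p => dslope_eq_integral_deriv (hf.of_le (by simp)) p.1 p.2
  rw [hdslope]
  exact contDiff_intervalIntegral n (H := fun (p : ℝ × ℝ) θ => deriv f (p.1 + θ * (p.2 - p.1)))
    (hderiv.comp (by fun_prop)) 0 1

end ParametricIntegral

/-- The standard parametrization `θ ↦ exp (iθ)` of the unit circle. -/
local notation "χ" => circleMap (0 : ℂ) 1

/-- A regular simple closed plane curve of class `C⁴`, parametrized with period `2π`. -/
structure IsSimpleLoop (l : ℝ → ℂ) : Prop where
  contDiff : ContDiff ℝ 4 l
  periodic : Periodic l (2 * π)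
  deriv_ne_zero : ∀ s, deriv l s ≠ 0
  circleMap_eq : ∀ {s t}, l s = l t → χ s = χ t

/-- The quotient of the chord of `l` by the corresponding chord of the unit circle, extended to the
diagonal `χ s = χ t` by the quotient of the tangents. -/
noncomputable def chordRatio (l : ℝ → ℂ) (p : ℝ × ℝ) : ℂ :=
  open Classical in
  if χ p.1 = χ p.2 then deriv l p.1 / deriv χ p.1 else (l p.1 - l p.2) / (χ p.1 - χ p.2)

/-- The kernel `l'(s) / (l(s) - l(t))`; its real and imaginary parts are the kernels of the
matrices `B` and `A`. -/
noncomputable def cauchyKernel (l : ℝ → ℂ) (s t : ℝ) : ℂ := deriv l s / (l s - l t)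

/-- Periodicity with period `2π` in each of the two variables. -/
structure DoublyPeriodic {E : Type*} (f : ℝ × ℝ → E) : Prop where
  fst : ∀ t, Periodic (fun s => f (s, t)) (2 * π)
  snd : ∀ s, Periodic (fun t => f (s, t)) (2 * π)

section Circle

theorem circleMap_eq_iff_exists_int {s t : ℝ} : χ s = χ t ↔ ∃ k : ℤ, s = t + k * (2 * π) := by
  rw [circleMap_eq_circleMap_iff 0 one_ne_zero]
  refine exists_congr fun k => ?_
  rw [← mul_assoc, ← add_mul, mul_left_inj' Complex.I_ne_zero]
  exact_mod_cast Iff.rfl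

theorem exists_int_abs_sub_le_pi (s t : ℝ) : ∃ k : ℤ, |s - (t + k * (2 * π))| ≤ π := by
  obtain ⟨k, hk, -⟩ := existsUnique_add_zsmul_mem_Ioc two_pi_pos (s - t) (-π)
  refine ⟨-k, abs_le.2 ?_⟩
  rw [zsmul_eq_mul] at hk
  push_cast
  constructor <;> linarith [hk.1, hk.2]

theorem circleMap_eq_iff_eq_of_abs_sub_lt {s t : ℝ} (hst : |s - t| < 2 * π) :
    χ s = χ t ↔ s = t := by
  refine ⟨fun h => ?_, congrArg _⟩
  obtain ⟨k, rfl⟩ := circleMap_eq_iff_exists_int.1 h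
  rw [add_sub_cancel_left, abs_mul, abs_of_pos two_pi_pos, mul_lt_iff_lt_one_left two_pi_pos] at hst
  have hk : k = 0 := Int.abs_lt_one_iff.1 (by exact_mod_cast hst)
  simp [hk]

end Circle

section ChordRatio

variable {l : ℝ → ℂ}

theorem chordRatio_of_eq (l : ℝ → ℂ) {s t : ℝ} (h : χ s = χ t) :
    chordRatio l (s, t) = deriv l s / deriv χ s :=
  if_pos h

theorem chordRatio_of_ne (l : ℝ → ℂ) {s t : ℝ} (h : χ s ≠ χ t) :
    chordRatio l (s, t) = (l s - l t) / (χ s - χ t) :=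
  if_neg h

theorem chordRatio_eq_div_dslope (l : ℝ → ℂ) {s t : ℝ} (hst : |s - t| < 2 * π) :
    chordRatio l (s, t) = dslope l t s / dslope χ t s := by
  rcases eq_or_ne s t with rfl | hne
  · rw [chordRatio_of_eq l rfl, dslope_same, dslope_same]
  · rw [chordRatio_of_ne l (mt (circleMap_eq_iff_eq_of_abs_sub_lt hst).1 hne),
      ← sub_smul_dslope l, ← sub_smul_dslope χ, Complex.real_smul, Complex.real_smul,
      mul_div_mul_left _ _ (Complex.ofReal_ne_zero.2 (sub_ne_zero.2 hne))]

theorem dslope_circleMap_ne_zero {s t : ℝ} (hst : |s - t| < 2 * π) : dslope χ t s ≠ 0 := by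
  rcases eq_or_ne s t with rfl | hne
  · exact (dslope_same χ s).trans_ne (deriv_circleMap_ne_zero one_ne_zero)
  · intro h
    have hχ : χ s - χ t = 0 := by rw [← sub_smul_dslope, h, smul_zero]
    exact hne ((circleMap_eq_iff_eq_of_abs_sub_lt hst).1 (sub_eq_zero.1 hχ))

namespace IsSimpleLoop

theorem continuous (hl : IsSimpleLoop l) : Continuous l := hl.contDiff.continuous

theorem hasDerivAt (hl : IsSimpleLoop l) (s : ℝ) : HasDerivAt l (deriv l s) s :=
  (hl.contDiff.differentiable (by norm_num) s).hasDerivAt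

theorem periodic_deriv (hl : IsSimpleLoop l) : Periodic (deriv l) (2 * π) := fun s => by
  rw [← deriv_comp_add_const, funext hl.periodic]

theorem eq_iff (hl : IsSimpleLoop l) {s t : ℝ} : l s = l t ↔ χ s = χ t := by
  refine ⟨hl.circleMap_eq, fun h => ?_⟩
  obtain ⟨k, rfl⟩ := circleMap_eq_iff_exists_int.1 h
  exact hl.periodic.int_mul k t

theorem chordRatio_mul (hl : IsSimpleLoop l) (s t : ℝ) :
    chordRatio l (s, t) * (χ s - χ t) = l s - l t := by
  by_cases h : χ s = χ t
  · rw [h, hl.eq_iff.2 h, sub_self, sub_self, mul_zero]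
  · rw [chordRatio_of_ne l h, div_mul_cancel₀ _ (sub_ne_zero.2 h)]

theorem chordRatio_ne_zero (hl : IsSimpleLoop l) (p : ℝ × ℝ) : chordRatio l p ≠ 0 := by
  obtain ⟨s, t⟩ := p
  by_cases h : χ s = χ t
  · rw [chordRatio_of_eq l h]
    exact div_ne_zero (hl.deriv_ne_zero s) (deriv_circleMap_ne_zero one_ne_zero)
  · rw [chordRatio_of_ne l h]
    exact div_ne_zero (sub_ne_zero.2 (mt hl.eq_iff.1 h)) (sub_ne_zero.2 h)

theorem doublyPeriodic_chordRatio (hl : IsSimpleLoop l) : DoublyPeriodic (chordRatio l) where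
  fst t s := by
    simp only [chordRatio, deriv_circleMap, periodic_circleMap 0 1 s, hl.periodic s,
      hl.periodic_deriv s]
  snd s t := by simp only [chordRatio, periodic_circleMap 0 1 t, hl.periodic t]

end IsSimpleLoop

theorem IsSimpleLoop.contDiff_chordRatio (hl : IsSimpleLoop l) : ContDiff ℝ 3 (chordRatio l) := by
  refine contDiff_iff_contDiffAt.2 fun ⟨s₀, t₀⟩ => ?_
  obtain ⟨k, hk⟩ := exists_int_abs_sub_le_pi s₀ t₀
  have hnear : ∀ᶠ p : ℝ × ℝ in 𝓝 (s₀, t₀), |p.1 - (p.2 + k * (2 * π))| < 2 * π := by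
    have hcont : Continuous fun p : ℝ × ℝ => |p.1 - (p.2 + k * (2 * π))| := by fun_prop
    exact hcont.continuousAt.eventually_lt_const (by linarith [pi_pos])
  have hlocal : chordRatio l =ᶠ[𝓝 (s₀, t₀)] fun p =>
      dslope l (p.2 + k * (2 * π)) p.1 * (dslope χ (p.2 + k * (2 * π)) p.1)⁻¹ := by
    filter_upwards [hnear] with p hp
    rw [← div_eq_mul_inv, ← chordRatio_eq_div_dslope l hp]
    exact ((hl.doublyPeriodic_chordRatio.snd p.1).int_mul k p.2).symm
  have hshift : ContDiff ℝ 3 fun p : ℝ × ℝ => (p.2 + k * (2 * π), p.1) := by fun_prop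
  have hnum : ContDiff ℝ 3 (uncurry (dslope l)) :=
    contDiff_uncurry_dslope (n := 3) (by norm_num; exact hl.contDiff)
  have hden : ContDiff ℝ 3 (uncurry (dslope χ)) :=
    contDiff_uncurry_dslope (n := 3) (contDiff_circleMap 0 1)
  exact ((hnum.comp hshift).contDiffAt.mul ((hden.comp hshift).contDiffAt.inv
    (dslope_circleMap_ne_zero hnear.self_of_nhds))).congr_of_eventuallyEq hlocal

end ChordRatio

section PartialDerivatives

variable {E : Type*} [NormedAddCommGroup E]

theorem DoublyPeriodic.exists_norm_le {f : ℝ × ℝ → E} (hf : DoublyPeriodic f)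
    (hcont : Continuous f) : ∃ C, ∀ p, ‖f p‖ ≤ C := by
  obtain ⟨C, hC⟩ := (isCompact_Icc.prod isCompact_Icc).exists_bound_of_continuousOn
    (s := Icc 0 (2 * π) ×ˢ Icc 0 (2 * π)) hcont.continuousOn
  refine ⟨C, fun ⟨s, t⟩ => ?_⟩
  obtain ⟨s', hs', hs⟩ := (hf.fst t).exists_mem_Ico₀ two_pi_pos s
  obtain ⟨t', ht', ht⟩ := (hf.snd s').exists_mem_Ico₀ two_pi_pos t
  exact (congrArg norm (hs.trans ht)).trans_le
    (hC _ ⟨Ico_subset_Icc_self hs', Ico_subset_Icc_self ht'⟩)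

variable [NormedSpace ℝ E]

theorem DoublyPeriodic.deriv_fst {f : ℝ × ℝ → E} (hf : DoublyPeriodic f) :
    DoublyPeriodic fun p => deriv (fun s => f (s, p.2)) p.1 where
  fst t s := by
    beta_reduce
    rw [← deriv_comp_add_const, funext (hf.fst t)]
  snd s t := congrFun (congrArg deriv (funext fun s => hf.snd s t)) s

theorem contDiff_deriv_fst {f : ℝ × ℝ → E} {n : WithTop ℕ∞} (hf : ContDiff ℝ (n + 1) f) :
    ContDiff ℝ n fun p : ℝ × ℝ => deriv (fun s => f (s, p.2)) p.1 :=
  ContDiff.fderiv_apply (f := fun (p : ℝ × ℝ) s => f (s, p.2)) (hf.comp (by fun_prop))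
    contDiff_fst contDiff_const le_rfl

theorem DoublyPeriodic.exists_norm_deriv_fst_le {f : ℝ × ℝ → E} (hf : DoublyPeriodic f)
    (hf₁ : ContDiff ℝ 1 f) : ∃ C, ∀ s t, ‖deriv (fun s => f (s, t)) s‖ ≤ C := by
  obtain ⟨C, hC⟩ := hf.deriv_fst.exists_norm_le (contDiff_deriv_fst (n := 0) hf₁).continuous
  exact ⟨C, fun s t => hC (s, t)⟩

theorem DoublyPeriodic.exists_norm_deriv_snd_le {f : ℝ × ℝ → E} (hf : DoublyPeriodic f)
    (hf₁ : ContDiff ℝ 1 f) : ∃ C, ∀ s t, ‖deriv (fun t => f (s, t)) t‖ ≤ C := by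
  have hswap : DoublyPeriodic (f ∘ Prod.swap) := ⟨hf.snd, hf.fst⟩
  obtain ⟨C, hC⟩ := hswap.exists_norm_deriv_fst_le (hf₁.comp (contDiff_snd.prodMk contDiff_fst))
  exact ⟨C, fun s t => hC t s⟩

end PartialDerivatives

section CauchyKernel

variable {l : ℝ → ℂ}

/-- The difference between the Cauchy kernels of `l` and of the unit circle, extended to the
diagonal: the logarithmic derivative of the chord ratio in its first variable. -/
noncomputable def kernelCorrection (l : ℝ → ℂ) (p : ℝ × ℝ) : ℂ :=
  logDeriv (fun s => chordRatio l (s, p.2)) p.1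

theorem isSimpleLoop_circleMap : IsSimpleLoop χ where
  contDiff := contDiff_circleMap 0 1
  periodic := periodic_circleMap 0 1
  deriv_ne_zero _ := deriv_circleMap_ne_zero one_ne_zero
  circleMap_eq := id

namespace IsSimpleLoop

theorem contDiff_kernelCorrection (hl : IsSimpleLoop l) : ContDiff ℝ 2 (kernelCorrection l) :=
  (contDiff_deriv_fst (n := 2) (by norm_num; exact hl.contDiff_chordRatio)).mul
    ((hl.contDiff_chordRatio.of_le (by norm_num)).inv hl.chordRatio_ne_zero)

theorem doublyPeriodic_kernelCorrection (hl : IsSimpleLoop l) :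
    DoublyPeriodic (kernelCorrection l) where
  fst t s := congrArg₂ (· / ·) (hl.doublyPeriodic_chordRatio.deriv_fst.fst t s)
    (hl.doublyPeriodic_chordRatio.fst t s)
  snd s t := congrArg₂ (· / ·) (hl.doublyPeriodic_chordRatio.deriv_fst.snd s t)
    (hl.doublyPeriodic_chordRatio.snd s t)

theorem cauchyKernel_eq_logDeriv (hl : IsSimpleLoop l) (s t : ℝ) :
    cauchyKernel l s t = logDeriv (fun s => l s - l t) s := by
  rw [logDeriv_apply, ((hl.hasDerivAt s).sub_const _).deriv, cauchyKernel]

theorem cauchyKernel_eq_add (hl : IsSimpleLoop l) {s t : ℝ} (hst : χ s ≠ χ t) :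
    cauchyKernel l s t = cauchyKernel χ s t + kernelCorrection l (s, t) := by
  have hdiff : DifferentiableAt ℝ (fun s => chordRatio l (s, t)) s :=
    (hl.contDiff_chordRatio.differentiable (by norm_num)).comp (by fun_prop) s
  have hmul := logDeriv_mul (g := fun s => χ s - χ t) s (hl.chordRatio_ne_zero (s, t))
    (sub_ne_zero.2 hst) hdiff ((differentiable_circleMap 0 1 s).sub_const (χ t))
  simp only [hl.chordRatio_mul] at hmul
  rw [hl.cauchyKernel_eq_logDeriv, isSimpleLoop_circleMap.cauchyKernel_eq_logDeriv,
    kernelCorrection, hmul, add_comm]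

theorem hasDerivAt_cauchyKernel_snd (hl : IsSimpleLoop l) {s t : ℝ} (hst : χ s ≠ χ t) :
    HasDerivAt (cauchyKernel l s) (-(cauchyKernel l s t * cauchyKernel l t s)) t := by
  have hne : l s - l t ≠ 0 := sub_ne_zero.2 (mt hl.eq_iff.1 hst)
  have hquot := (hasDerivAt_const t (deriv l s)).fun_div ((hl.hasDerivAt t).const_sub (l s)) hne
  refine hquot.congr_deriv ?_
  rw [cauchyKernel, cauchyKernel, ← neg_sub (l s) (l t)]
  field

theorem cauchyKernel_mul_cauchyKernel_swap (hl : IsSimpleLoop l) {s t : ℝ} (hst : χ s ≠ χ t) :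
    cauchyKernel l s t * cauchyKernel l t s =
      cauchyKernel χ s t * cauchyKernel χ t s - deriv (fun t => kernelCorrection l (s, t)) t := by
  have hcircle := isSimpleLoop_circleMap.hasDerivAt_cauchyKernel_snd hst
  have hcorr : DifferentiableAt ℝ (fun t => kernelCorrection l (s, t)) t :=
    (hl.contDiff_kernelCorrection.differentiable two_ne_zero).comp (by fun_prop) t
  have hnear : cauchyKernel l s =ᶠ[𝓝 t] cauchyKernel χ s + fun t => kernelCorrection l (s, t) :=
    ((continuous_circleMap 0 1).continuousAt.eventually_ne hst.symm).mono
      fun u hu => hl.cauchyKernel_eq_add hu.symm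
  have hderiv := (hl.hasDerivAt_cauchyKernel_snd hst).unique
    ((hcircle.add hcorr.hasDerivAt).congr_of_eventuallyEq hnear)
  linear_combination -hderiv

end IsSimpleLoop

end CauchyKernel

section LogDerivIntegral

open Complex (slitPlane)

theorem integral_logDeriv_eq_zero_of_mem_slitPlane {f : ℝ → ℂ} {a b : ℝ} (hf : ContDiff ℝ 1 f)
    (hslit : ∀ s ∈ uIcc a b, f s ∈ slitPlane) (hab : f a = f b) :
    ∫ s in a..b, logDeriv f s = 0 := by
  have hlog : ∀ s ∈ uIcc a b, HasDerivAt (fun s => Complex.log (f s)) (logDeriv f s) s :=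
    fun s hs => (hf.differentiable one_ne_zero s).hasDerivAt.clog_real (hslit s hs)
  have hcont : ContinuousOn (logDeriv f) (uIcc a b) :=
    (hf.continuous_deriv le_rfl).continuousOn.div₀ hf.continuous.continuousOn
      fun s hs => Complex.slitPlane_ne_zero (hslit s hs)
  rw [intervalIntegral.integral_eq_sub_of_hasDerivAt hlog hcont.intervalIntegrable, hab, sub_self]

theorem integral_logDeriv_congr {f g : ℝ → ℂ} {a b : ℝ} (hf : ContDiff ℝ 1 f)
    (hg : ContDiff ℝ 1 g) (hf₀ : ∀ s, f s ≠ 0) (hg₀ : ∀ s, g s ≠ 0)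
    (hslit : ∀ s ∈ uIcc a b, f s / g s ∈ slitPlane) (hfab : f a = f b) (hgab : g a = g b) :
    ∫ s in a..b, logDeriv f s = ∫ s in a..b, logDeriv g s := by
  have hzero : ∫ s in a..b, logDeriv (fun s => f s / g s) s = 0 :=
    integral_logDeriv_eq_zero_of_mem_slitPlane (hf.mul (hg.inv hg₀)) hslit (by rw [hfab, hgab])
  have hint : ∀ {h : ℝ → ℂ}, ContDiff ℝ 1 h → (∀ s, h s ≠ 0) →
      IntervalIntegrable (logDeriv h) volume a b := fun hh hh₀ =>
    ((hh.continuous_deriv le_rfl).div hh.continuous hh₀).intervalIntegrable a b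
  simp only [fun s => logDeriv_div s (hf₀ s) (hg₀ s) (hf.differentiable one_ne_zero s)
    (hg.differentiable one_ne_zero s)] at hzero
  rwa [intervalIntegral.integral_sub (hint hf hf₀) (hint hg hg₀), sub_eq_zero] at hzero

theorem integral_logDeriv_eq_of_homotopy {f : ℝ × ℝ → ℂ} {a b : ℝ} (hf : ContDiff ℝ 1 f)
    (hf₀ : ∀ p, f p ≠ 0) (hab : ∀ t, f (a, t) = f (b, t)) (t t₀ : ℝ) :
    ∫ s in a..b, logDeriv (fun s => f (s, t)) s =
      ∫ s in a..b, logDeriv (fun s => f (s, t₀)) s := by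
  have hslice : ∀ t, ContDiff ℝ 1 fun s => f (s, t) := fun t => hf.comp (by fun_prop)
  refine IsLocallyConstant.apply_eq_of_isPreconnected
    (f := fun t => ∫ s in a..b, logDeriv (fun s => f (s, t)) s)
    ((IsLocallyConstant.iff_eventually_eq _).2 fun t₀ => ?_) isPreconnected_univ
    (mem_univ t) (mem_univ t₀)
  have hnear : ∀ᶠ t in 𝓝 t₀, ∀ s ∈ uIcc a b, f (s, t) / f (s, t₀) ∈ slitPlane := by
    refine isCompact_uIcc.eventually_forall_of_forall_eventually fun s _ => ?_
    have hquot : Continuous fun p : ℝ × ℝ => f (p.2, p.1) / f (p.2, t₀) :=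
      (hf.continuous.comp (by fun_prop)).div (hf.continuous.comp (by fun_prop)) fun _ => hf₀ _
    refine hquot.continuousAt.eventually_mem (Complex.isOpen_slitPlane.mem_nhds ?_)
    rw [div_self (hf₀ _)]
    exact Complex.one_mem_slitPlane
  filter_upwards [hnear] with t ht
  exact integral_logDeriv_congr (hslice t) (hslice t₀) (fun _ => hf₀ _) (fun _ => hf₀ _) ht
    (hab t) (hab t₀)

end LogDerivIntegral

section MeanZero

open Complex (slitPlane I)

variable {l : ℝ → ℂ}

theorem div_mem_slitPlane {z w : ℂ} (hz : 0 ≤ z.re) (hz₀ : z ≠ 0) (hw : 0 < w.re) :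
    z / w ∈ slitPlane := by
  have hw₀ : w ≠ 0 := fun h => hw.ne' (by simp [h])
  by_contra hslit
  obtain ⟨hre, him⟩ := not_or.1 hslit
  have hreal : z / w = ((z / w).re : ℂ) := Complex.ext rfl (not_not.1 him)
  have hzw : z = ((z / w).re : ℂ) * w := by rw [← hreal, div_mul_cancel₀ z hw₀]
  have hzero : (z / w).re = 0 := by
    rw [hzw, Complex.re_ofReal_mul] at hz
    exact le_antisymm (not_lt.1 hre) (nonneg_of_mul_nonneg_left hz hw)
  exact hz₀ (by rw [hzw, hzero, Complex.ofReal_zero, zero_mul])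

theorem re_circleMap_lt_one {s t : ℝ} (h : χ s ≠ χ t) : (χ s / χ t).re < 1 := by
  have hnorm : ‖χ s / χ t‖ = 1 := by simp only [norm_div, norm_circleMap_zero, abs_one, div_one]
  refine ((Complex.re_le_norm _).trans_eq hnorm).lt_of_ne fun hre => h ?_
  have him : (χ s / χ t).im = 0 := by
    have hsq := Complex.sq_norm_sub_sq_re (χ s / χ t)
    rw [hnorm, hre, sub_self] at hsq
    exact pow_eq_zero_iff two_ne_zero |>.1 hsq.symm
  exact (div_eq_one_iff_eq (circleMap_ne_center one_ne_zero)).1 (Complex.ext hre him)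

namespace IsSimpleLoop

theorem exists_forall_re_le (hl : IsSimpleLoop l) : ∃ a, ∀ s, (l s).re ≤ (l a).re := by
  have hcont : Continuous fun s => (l s).re := Complex.continuous_re.comp hl.continuous
  obtain ⟨a, -, ha⟩ := isCompact_Icc.exists_isMaxOn (nonempty_Icc.2 two_pi_pos.le)
    hcont.continuousOn
  refine ⟨a, fun s => ?_⟩
  obtain ⟨s', hs', hs⟩ := hl.periodic.exists_mem_Ico₀ two_pi_pos s
  rw [hs]
  exact ha (Ico_subset_Icc_self hs')

theorem re_deriv_eq_zero (hl : IsSimpleLoop l) {a : ℝ} (ha : ∀ s, (l s).re ≤ (l a).re) :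
    (deriv l a).re = 0 :=
  IsLocalMax.hasDerivAt_eq_zero (f := fun s => (l s).re) (.of_forall ha)
    (Complex.reCLM.hasFDerivAt.comp_hasDerivAt a (hl.hasDerivAt a))

theorem chordRatio_mul_circleMap_mem_slitPlane (hl : IsSimpleLoop l) {a : ℝ}
    (ha : ∀ s, (l s).re ≤ (l a).re) (hpos : 0 < (deriv l a).im) (s : ℝ) :
    chordRatio l (s, a) * χ a ∈ slitPlane := by
  have hχa : χ a ≠ 0 := circleMap_ne_center one_ne_zero
  by_cases hs : χ s = χ a
  · obtain ⟨k, hk⟩ := circleMap_eq_iff_exists_int.1 hs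
    have hvertical : deriv l s = (deriv l a).im * I := by
      rw [hk, hl.periodic_deriv.int_mul k a]
      exact Complex.ext (by simp [hl.re_deriv_eq_zero ha]) (by simp)
    rw [chordRatio_of_eq l hs, deriv_circleMap, hs, hvertical,
      mul_div_mul_right _ _ Complex.I_ne_zero, div_mul_cancel₀ _ hχa]
    exact Complex.ofReal_mem_slitPlane.2 hpos
  · have hchord : chordRatio l (s, a) * χ a = (l a - l s) / (1 - χ s / χ a) := by
      rw [chordRatio_of_ne l hs, one_sub_div hχa, div_div_eq_mul_div, ← neg_sub (l a),
        ← neg_sub (χ a), neg_div_neg_eq, div_mul_eq_mul_div]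
    rw [hchord]
    refine div_mem_slitPlane ?_ (sub_ne_zero.2 (mt hl.eq_iff.1 (Ne.symm hs))) ?_
    · rw [Complex.sub_re]; linarith [ha s]
    · rw [Complex.sub_re, Complex.one_re]; linarith [re_circleMap_lt_one hs]

theorem integral_kernelCorrection_eq_zero (hl : IsSimpleLoop l) {a : ℝ}
    (ha : ∀ s, (l s).re ≤ (l a).re) (hpos : 0 < (deriv l a).im) (t : ℝ) :
    ∫ s in 0..2 * π, kernelCorrection l (s, t) = 0 := by
  have hQ : ContDiff ℝ 1 (chordRatio l) := hl.contDiff_chordRatio.of_le (by norm_num)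
  have hperiod : ∀ t, chordRatio l (0, t) = chordRatio l (2 * π, t) := fun t =>
    (hl.doublyPeriodic_chordRatio.fst t).eq.symm
  have hslit := integral_logDeriv_eq_zero_of_mem_slitPlane (a := 0) (b := 2 * π)
    (f := fun s => chordRatio l (s, a) * χ a) ((hQ.comp (by fun_prop)).mul contDiff_const)
    (fun s _ => hl.chordRatio_mul_circleMap_mem_slitPlane ha hpos s) (by rw [hperiod a])
  simp only [logDeriv_mul_const _ _ (circleMap_ne_center one_ne_zero)] at hslit
  exact (integral_logDeriv_eq_of_homotopy hQ hl.chordRatio_ne_zero hperiod t a).trans hslit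

end IsSimpleLoop

end MeanZero

section MidpointRule

variable {E : Type*} [NormedAddCommGroup E] [NormedSpace ℝ E] {g g' : ℝ → E} {C : ℝ}

theorem norm_sub_sub_smul_deriv_le (hg : ∀ t, HasDerivAt g (g' t) t)
    (hlip : ∀ x y, ‖g' x - g' y‖ ≤ C * |x - y|) (c t : ℝ) :
    ‖g t - g c - (t - c) • g' c‖ ≤ C * |t - c| ^ 2 := by
  have hderiv (x : ℝ) : HasDerivAt (fun x => g x - (x - c) • g' c) (g' x - g' c) x := by
    simpa only [one_smul] using
      (hg x).fun_sub (((hasDerivAt_id' x).sub_const c).smul_const (g' c))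
  have hC : 0 ≤ C := by simpa using (norm_nonneg _).trans (hlip 1 0)
  have hmean := (convex_uIcc c t).norm_image_sub_le_of_norm_hasDerivWithin_le
    (fun x _ => (hderiv x).hasDerivWithinAt) (C := C * |t - c|)
    (fun x hx => (hlip x c).trans <|
      mul_le_mul_of_nonneg_left (abs_sub_left_of_mem_uIcc hx) hC) left_mem_uIcc right_mem_uIcc
  calc ‖g t - g c - (t - c) • g' c‖
      = ‖g t - (t - c) • g' c - (g c - (c - c) • g' c)‖ := by
        rw [sub_self, zero_smul, sub_zero, sub_right_comm]
    _ ≤ C * |t - c| * ‖t - c‖ := hmean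
    _ = C * |t - c| ^ 2 := by rw [Real.norm_eq_abs]; ring

variable [CompleteSpace E]

/- The linear part of `g` at the midpoint integrates to zero. -/
theorem norm_integral_sub_smul_midpoint_le (hg : ∀ t, HasDerivAt g (g' t) t)
    (hlip : ∀ x y, ‖g' x - g' y‖ ≤ C * |x - y|) (c : ℝ) {h : ℝ} (hh : 0 ≤ h) :
    ‖(∫ t in (c - h / 2)..(c + h / 2), g t) - h • g c‖ ≤ C * h ^ 3 / 4 := by
  have hgc : Continuous g := continuous_iff_continuousAt.2 fun t => (hg t).continuousAt
  have hC : 0 ≤ C := by simpa using (norm_nonneg _).trans (hlip 1 0)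
  have hlinear : ∫ t in (c - h / 2)..(c + h / 2), (t - c) • g' c = 0 := by
    rw [intervalIntegral.integral_smul_const, intervalIntegral.integral_comp_sub_right (fun t => t),
      integral_id]
    simp
  have hsub : (∫ t in (c - h / 2)..(c + h / 2), g t) - h • g c
      = ∫ t in (c - h / 2)..(c + h / 2), (g t - g c - (t - c) • g' c) := by
    rw [intervalIntegral.integral_sub, hlinear, intervalIntegral.integral_sub,
      intervalIntegral.integral_const, sub_zero, add_sub_sub_cancel, add_halves]
    all_goals exact Continuous.intervalIntegrable (by fun_prop) _ _
  have hbound (t : ℝ) (ht : t ∈ uIoc (c - h / 2) (c + h / 2)) :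
      ‖g t - g c - (t - c) • g' c‖ ≤ C * (h / 2) ^ 2 := by
    rw [uIoc_of_le (by linarith)] at ht
    have htc : |t - c| ≤ h / 2 := abs_le.2 ⟨by linarith [ht.1], by linarith [ht.2]⟩
    exact (norm_sub_sub_smul_deriv_le hg hlip c t).trans (by gcongr)
  rw [hsub]
  refine (intervalIntegral.norm_integral_le_of_norm_le_const hbound).trans_eq ?_
  rw [add_sub_sub_cancel, add_halves, abs_of_nonneg hh]
  ring

theorem norm_smul_sum_sub_integral_le_of_periodic {T : ℝ} (hT : 0 ≤ T)
    (hg : ∀ t, HasDerivAt g (g' t) t) (hlip : ∀ x y, ‖g' x - g' y‖ ≤ C * |x - y|)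
    (hper : Periodic g T) (β : ℝ) (N : ℕ) [NeZero N] :
    ‖(T / N) • ∑ j : Fin N, g ((j + β) * (T / N)) - ∫ t in 0..T, g t‖
      ≤ C * T ^ 3 / (4 * N ^ 2) := by
  have hN : (0 : ℝ) < N := Nat.cast_pos.2 (NeZero.pos N)
  have hgc : Continuous g := continuous_iff_continuousAt.2 fun t => (hg t).continuousAt
  set h := T / N with hh
  have hNh : N * h = T := by rw [hh]; field_simp
  have hcell : ∫ t in 0..T, g t
      = ∑ j : Fin N, ∫ t in ((j + β) * h - h / 2)..((j + β) * h + h / 2), g t := by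
    have hadj := intervalIntegral.sum_integral_adjacent_intervals (f := g) (μ := volume)
      (a := fun k : ℕ => (k + β) * h - h / 2) (n := N) fun k _ => hgc.intervalIntegrable _ _
    have hshift := hper.intervalIntegral_add_eq 0 (((0 : ℕ) + β) * h - h / 2)
    rw [zero_add] at hshift
    rw [hshift, Fin.sum_univ_eq_sum_range
      (fun j : ℕ => ∫ t in ((j + β) * h - h / 2)..((j + β) * h + h / 2), g t) N]
    convert hadj.symm using 3
    · rw [← hNh]; push_cast; ring
    · push_cast; ring
  rw [hcell, Finset.smul_sum, ← Finset.sum_sub_distrib]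
  calc _ ≤ ∑ _j : Fin N, C * h ^ 3 / 4 := norm_sum_le_of_le _ fun j _ => by
        rw [norm_sub_rev]
        exact norm_integral_sub_smul_midpoint_le hg hlip _ (by positivity)
    _ = C * T ^ 3 / (4 * N ^ 2) := by
        rw [Finset.sum_const, Finset.card_fin, nsmul_eq_mul, hh]
        field_simp

end MidpointRule

section RootsOfUnity

theorem one_sub_mul_pow_ne_zero {K : Type*} [Field K] {N : ℕ} {w η : K} (hw : w ^ N = 1)
    (hη : η ^ N ≠ 1) (j : ℕ) : 1 - η * w ^ j ≠ 0 := fun h => hη <| by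
  rw [← mul_one (η ^ N), ← one_pow j, ← hw, pow_right_comm, ← mul_pow, ← sub_eq_zero.1 h, one_pow,
    pow_right_comm, hw, one_pow]

theorem sum_inv_one_sub_mul_pow {K : Type*} [Field K] {N : ℕ} {w η : K}
    (hw : IsPrimitiveRoot w N) (hη : η ^ N ≠ 1) :
    ∑ j ∈ Finset.range N, (1 - η * w ^ j)⁻¹ = N / (1 - η ^ N) := by
  rcases N.eq_zero_or_pos with rfl | hN
  · simp
  have hpow (j : ℕ) : (η * w ^ j) ^ N = η ^ N := by
    rw [mul_pow, pow_right_comm, hw.pow_eq_one, one_pow, mul_one]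
  have hgeom (j : ℕ) :
      (1 - η * w ^ j)⁻¹ = (1 - η ^ N)⁻¹ * ∑ m ∈ Finset.range N, η ^ m * (w ^ m) ^ j := by
    have hfactor := mul_neg_geom_sum (η * w ^ j) N
    simp_rw [hpow, mul_pow, pow_right_comm w j] at hfactor
    rw [eq_inv_mul_iff_mul_eq₀ (sub_ne_zero.2 hη.symm), ← hfactor, mul_right_comm,
      mul_inv_cancel₀ (one_sub_mul_pow_ne_zero hw.pow_eq_one hη j), one_mul]
  have horth (m : ℕ) (hm : m ∈ Finset.range N) (hm0 : m ≠ 0) :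
      ∑ j ∈ Finset.range N, η ^ m * (w ^ m) ^ j = 0 := by
    have hwm : w ^ m ≠ 1 := hw.pow_ne_one_of_pos_of_lt hm0 (Finset.mem_range.1 hm)
    rw [← Finset.mul_sum, geom_sum_eq hwm, pow_right_comm, hw.pow_eq_one, one_pow, sub_self,
      zero_div, mul_zero]
  simp_rw [hgeom, ← Finset.mul_sum]
  rw [Finset.sum_comm, Finset.sum_eq_single_of_mem 0 (Finset.mem_range.2 hN) horth]
  simp [div_eq_inv_mul]

/- Differentiate `sum_inv_one_sub_mul_pow` in `η`. -/
theorem sum_div_one_sub_mul_pow_sq {N : ℕ} {w η : ℂ} (hw : IsPrimitiveRoot w N)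
    (hη : η ^ N ≠ 1) :
    ∑ j ∈ Finset.range N, η * w ^ j / (1 - η * w ^ j) ^ 2 = N ^ 2 * η ^ N / (1 - η ^ N) ^ 2 := by
  have hleft : HasDerivAt (fun x => ∑ j ∈ Finset.range N, (1 - x * w ^ j)⁻¹)
      (∑ j ∈ Finset.range N, w ^ j / (1 - η * w ^ j) ^ 2) η :=
    HasDerivAt.fun_sum fun j _ => by
      simpa using (((hasDerivAt_id' η).mul_const (w ^ j)).const_sub 1).fun_inv
        (one_sub_mul_pow_ne_zero hw.pow_eq_one hη j)
  have hright : HasDerivAt (fun x : ℂ => N / (1 - x ^ N))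
      (N * (N * η ^ (N - 1)) / (1 - η ^ N) ^ 2) η := by
    simpa using (hasDerivAt_const η (N : ℂ)).fun_div ((hasDerivAt_pow N η).const_sub 1)
      (sub_ne_zero.2 hη.symm)
  have heq : ∀ᶠ x in 𝓝 η, ∑ j ∈ Finset.range N, (1 - x * w ^ j)⁻¹ = N / (1 - x ^ N) :=
    ((continuous_pow N).continuousAt.eventually_ne hη).mono fun x hx =>
      sum_inv_one_sub_mul_pow hw hx
  have hderiv := hleft.unique (hright.congr_of_eventuallyEq heq)
  simp_rw [mul_div_assoc]
  rw [← Finset.mul_sum, hderiv]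
  rcases N.eq_zero_or_pos with rfl | hN
  · simp
  · rw [← mul_pow_sub_one hN.ne' η]
    ring

theorem norm_inv_one_sub_sq_eq {z : ℂ} (hz : ‖z‖ = 1) :
    ((‖(1 - z)⁻¹‖ ^ 2 : ℝ) : ℂ) = -(z / (1 - z) ^ 2) := by
  have hz0 : z ≠ 0 := norm_ne_zero_iff.1 (hz ▸ one_ne_zero)
  have hnorm : ((‖1 - z‖ : ℝ) : ℂ) ^ 2 = -((1 - z) ^ 2 / z) := by
    rw [← Complex.mul_conj', map_sub, map_one, ← Complex.inv_eq_conj hz]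
    field_simp
    ring
  rw [norm_inv]
  push_cast
  rw [inv_pow, hnorm, inv_neg, inv_div]

variable {N : ℕ} {w η : ℂ}

theorem sum_norm_inv_one_sub_mul_pow_sq (hw : IsPrimitiveRoot w N) (hN : N ≠ 0)
    (hη : η ^ N = -1) :
    ∑ j ∈ Finset.range N, ‖(1 - η * w ^ j)⁻¹‖ ^ 2 = (N : ℝ) ^ 2 / 4 := by
  have hnorm (j : ℕ) : ‖η * w ^ j‖ = 1 := by
    rw [norm_mul, norm_pow, hw.norm'_eq_one hN, one_pow, mul_one]
    exact (pow_eq_one_iff_of_nonneg (norm_nonneg η) hN).1 (by rw [← norm_pow, hη]; simp)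
  have hne : η ^ N ≠ 1 := by rw [hη]; norm_num
  rw [← Complex.ofReal_inj, Complex.ofReal_sum]
  simp_rw [norm_inv_one_sub_sq_eq (hnorm _)]
  rw [Finset.sum_neg_distrib, sum_div_one_sub_mul_pow_sq hw hne, hη]
  push_cast
  ring

theorem norm_one_sub_pow_le_mul {z : ℂ} (hz : ‖z‖ = 1) (m : ℕ) : ‖1 - z ^ m‖ ≤ m * ‖1 - z‖ := by
  rw [← mul_neg_geom_sum, norm_mul, mul_comm]
  gcongr
  exact (norm_sum_le_of_le _ fun j _ => (norm_pow z j).le.trans_eq (by rw [hz, one_pow])).trans_eq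
    (by simp)

/- The powers of `z` sum to zero, so they are on average at distance at least `1` from `1`. -/
theorem one_le_mul_norm_one_sub_of_pow_eq_one {z : ℂ} {N : ℕ} (hN : N ≠ 0) (hz : z ^ N = 1)
    (hz₁ : z ≠ 1) : 1 ≤ N * ‖1 - z‖ := by
  have hnorm : ‖z‖ = 1 :=
    (pow_eq_one_iff_of_nonneg (norm_nonneg z) hN).1 (by rw [← norm_pow, hz, norm_one])
  have hsum : ∑ m ∈ Finset.range N, (1 - z ^ m) = N := by
    rw [Finset.sum_sub_distrib, geom_sum_eq hz₁, hz]
    simp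
  have hN' : (0 : ℝ) < N := by positivity
  refine le_of_mul_le_mul_left ?_ hN'
  calc N * 1 = ‖∑ m ∈ Finset.range N, (1 - z ^ m)‖ := by rw [hsum]; simp
    _ ≤ ∑ _m ∈ Finset.range N, N * ‖1 - z‖ := norm_sum_le_of_le _ fun m hm =>
        (norm_one_sub_pow_le_mul hnorm m).trans <| by
          gcongr
          exact (Finset.mem_range.1 hm).le
    _ = N * (N * ‖1 - z‖) := by simp

end RootsOfUnity

section Perturbation

variable {u v : ℂ} {δ : ℝ}

theorem norm_inv_sub_inv_le (h : ‖u - v‖ ≤ δ) (hδ : 2 * δ * ‖v⁻¹‖ ≤ 1) (hv : v ≠ 0) :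
    u ≠ 0 ∧ ‖u⁻¹ - v⁻¹‖ ≤ 2 * δ * ‖v⁻¹‖ ^ 2 := by
  have hpos : 0 < ‖v‖ := norm_pos_iff.2 hv
  rw [norm_inv, ← div_eq_mul_inv, div_le_one hpos] at hδ
  have hu : ‖v‖ / 2 ≤ ‖u‖ := by
    linarith [norm_sub_norm_le v u, norm_sub_rev u v]
  have hu0 : u ≠ 0 := norm_pos_iff.1 (by linarith)
  refine ⟨hu0, ?_⟩
  calc ‖u⁻¹ - v⁻¹‖ = ‖u - v‖ / (‖u‖ * ‖v‖) := by
        rw [inv_sub_inv hu0 hv, norm_div, norm_mul, norm_sub_rev]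
    _ ≤ δ / (‖v‖ / 2 * ‖v‖) := by gcongr; exact (norm_nonneg _).trans h
    _ = 2 * δ * ‖v⁻¹‖ ^ 2 := by rw [norm_inv]; field_simp

theorem abs_norm_inv_sq_sub_le (h : ‖u - v‖ ≤ δ) (hδ : 2 * δ * ‖v⁻¹‖ ≤ 1)
    (hv : v ≠ 0) : |‖u⁻¹‖ ^ 2 - ‖v⁻¹‖ ^ 2| ≤ 6 * δ * ‖v⁻¹‖ ^ 3 := by
  have hinv := (norm_inv_sub_inv_le h hδ hv).2
  have hdiff : |‖u⁻¹‖ - ‖v⁻¹‖| ≤ 2 * δ * ‖v⁻¹‖ ^ 2 := (abs_norm_sub_norm_le _ _).trans hinv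
  have hu : ‖u⁻¹‖ ≤ 2 * ‖v⁻¹‖ := by nlinarith [(abs_le.1 hdiff).2, norm_nonneg v⁻¹]
  calc |‖u⁻¹‖ ^ 2 - ‖v⁻¹‖ ^ 2| = (‖u⁻¹‖ + ‖v⁻¹‖) * |‖u⁻¹‖ - ‖v⁻¹‖| := by
        rw [sq_sub_sq, abs_mul, abs_of_nonneg (by positivity)]
    _ ≤ (2 * ‖v⁻¹‖ + ‖v⁻¹‖) * (2 * δ * ‖v⁻¹‖ ^ 2) := by gcongr
    _ = 6 * δ * ‖v⁻¹‖ ^ 3 := by ring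

variable {N : ℕ} {w η : ℂ} {ζ : Fin N → ℂ}

theorem norm_inv_one_sub_mul_pow_le (hw : IsPrimitiveRoot w N) (hη : η ^ N = -1) (j : Fin N) :
    ‖(1 - η * w ^ (j : ℕ))⁻¹‖ ≤ N / 2 := by
  have hN : N ≠ 0 := j.pos.ne'
  refine le_of_sq_le_sq ?_ (by positivity)
  calc ‖(1 - η * w ^ (j : ℕ))⁻¹‖ ^ 2 ≤ ∑ j ∈ Finset.range N, ‖(1 - η * w ^ j)⁻¹‖ ^ 2 :=
        Finset.single_le_sum (f := fun j => ‖(1 - η * w ^ j)⁻¹‖ ^ 2)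
          (fun _ _ => by positivity) (Finset.mem_range.2 j.2)
    _ = (N / 2) ^ 2 := by
        rw [sum_norm_inv_one_sub_mul_pow_sq hw hN hη]
        ring

variable (hw : IsPrimitiveRoot w N) (hη : η ^ N = -1) (hδ : N * δ ≤ 1)
  (hζ : ∀ j : Fin N, ‖ζ j - η * w ^ (j : ℕ)‖ ≤ δ)
include hw hη hδ hζ

theorem inv_one_sub_bounds (j : Fin N) :
    1 - ζ j ≠ 0 ∧
      ‖(1 - ζ j)⁻¹ - (1 - η * w ^ (j : ℕ))⁻¹‖ ≤ 2 * δ * ‖(1 - η * w ^ (j : ℕ))⁻¹‖ ^ 2 ∧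
      |‖(1 - ζ j)⁻¹‖ ^ 2 - ‖(1 - η * w ^ (j : ℕ))⁻¹‖ ^ 2|
        ≤ 6 * δ * ‖(1 - η * w ^ (j : ℕ))⁻¹‖ ^ 3 := by
  have hδ₀ : 0 ≤ δ := (norm_nonneg _).trans (hζ j)
  have hclose : ‖(1 - ζ j) - (1 - η * w ^ (j : ℕ))‖ ≤ δ := by
    rw [sub_sub_sub_cancel_left, norm_sub_rev]
    exact hζ j
  have hsmall : 2 * δ * ‖(1 - η * w ^ (j : ℕ))⁻¹‖ ≤ 1 := by
    nlinarith [norm_inv_one_sub_mul_pow_le hw hη j]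
  have hne := one_sub_mul_pow_ne_zero hw.pow_eq_one (by rw [hη]; norm_num) j
  obtain ⟨hζ₀, hinv⟩ := norm_inv_sub_inv_le hclose hsmall hne
  exact ⟨hζ₀, hinv, abs_norm_inv_sq_sub_le hclose hsmall hne⟩

theorem norm_sum_inv_one_sub_sub_le :
    ‖∑ j, (1 - ζ j)⁻¹ - N / 2‖ ≤ δ * N ^ 2 / 2 := by
  rcases eq_or_ne N 0 with rfl | hN
  · simp
  have hexact : (N : ℂ) / 2 = ∑ j : Fin N, (1 - η * w ^ (j : ℕ))⁻¹ := by
    rw [Fin.sum_univ_eq_sum_range (fun j => (1 - η * w ^ j)⁻¹),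
      sum_inv_one_sub_mul_pow hw (by rw [hη]; norm_num), hη]
    norm_num
  rw [hexact, ← Finset.sum_sub_distrib]
  calc _ ≤ ∑ j : Fin N, 2 * δ * ‖(1 - η * w ^ (j : ℕ))⁻¹‖ ^ 2 :=
        norm_sum_le_of_le _ fun j _ => (inv_one_sub_bounds hw hη hδ hζ j).2.1
    _ = δ * N ^ 2 / 2 := by
        rw [← Finset.mul_sum, Fin.sum_univ_eq_sum_range (fun j => ‖(1 - η * w ^ j)⁻¹‖ ^ 2),
          sum_norm_inv_one_sub_mul_pow_sq hw hN hη]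
        ring

theorem abs_sum_norm_inv_one_sub_sq_sub_le :
    |∑ j, ‖(1 - ζ j)⁻¹‖ ^ 2 - (N : ℝ) ^ 2 / 4| ≤ 3 * δ * N ^ 3 / 4 := by
  rcases eq_or_ne N 0 with rfl | hN
  · simp
  have hexact : ∑ j : Fin N, ‖(1 - η * w ^ (j : ℕ))⁻¹‖ ^ 2 = (N : ℝ) ^ 2 / 4 := by
    rw [Fin.sum_univ_eq_sum_range (fun j => ‖(1 - η * w ^ j)⁻¹‖ ^ 2),
      sum_norm_inv_one_sub_mul_pow_sq hw hN hη]
  rw [← hexact, ← Finset.sum_sub_distrib]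
  calc _ ≤ ∑ j : Fin N, 3 * δ * N * ‖(1 - η * w ^ (j : ℕ))⁻¹‖ ^ 2 := by
        refine (Finset.abs_sum_le_sum_abs _ _).trans (Finset.sum_le_sum fun j _ => ?_)
        have hδ₀ : 0 ≤ δ := (norm_nonneg _).trans (hζ j)
        calc _ ≤ 6 * δ * ‖(1 - η * w ^ (j : ℕ))⁻¹‖ ^ 3 := (inv_one_sub_bounds hw hη hδ hζ j).2.2
          _ = 6 * δ * ‖(1 - η * w ^ (j : ℕ))⁻¹‖ * ‖(1 - η * w ^ (j : ℕ))⁻¹‖ ^ 2 := by ring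
          _ ≤ 6 * δ * (N / 2) * ‖(1 - η * w ^ (j : ℕ))⁻¹‖ ^ 2 := by
              gcongr
              exact norm_inv_one_sub_mul_pow_le hw hη j
          _ = _ := by ring
    _ = 3 * δ * N ^ 3 / 4 := by
        rw [← Finset.mul_sum, hexact]
        ring

end Perturbation

/-- The nodes `a j` are the equidistant points `(j + α) 2π / N`, `0 ≤ j < N`, up to an error of
order `N⁻³`. The shift `α` is `0` or `1/2` for the two families of nodes of the theorem. -/
def IsWellDistributed (M α : ℝ) {N : ℕ} (a : Fin N → ℝ) : Prop :=
  ∀ j : Fin N, |a j - (j + α) * (2 * π / N)| ≤ M / N ^ 3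

/-- A pair of well distributed meshes, fine enough with respect to `M`, such that the nodes of each
one are close to the midpoints between neighbouring nodes of the other one. -/
structure IsStaggered (M α β : ℝ) {N : ℕ} (a b : Fin N → ℝ) : Prop where
  left : IsWellDistributed M α a
  right : IsWellDistributed M β b
  opposite : χ (2 * π * (α - β)) = -1
  large : 4 * M ≤ N ^ 2

section Mesh

theorem norm_circleMap_sub_le (s t : ℝ) : ‖χ s - χ t‖ ≤ |s - t| := by
  simpa [dist_eq_norm] using (lipschitzWith_circleMap 0 1).dist_le_mul s t

theorem circleMap_sub (s t : ℝ) : χ (s - t) = χ s / χ t := by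
  rw [circleMap_zero_div, div_one]

theorem circleMap_nat_mul (n : ℕ) (s : ℝ) : χ (n * s) = χ s ^ n := by
  rw [circleMap_zero_pow, one_pow]

theorem one_le_mul_norm_one_sub_circleMap_equidistant {N : ℕ} (α : ℝ) {i k : Fin N} (hik : i ≠ k) :
    1 ≤ N * ‖1 - χ ((i + α) * (2 * π / N) - (k + α) * (2 * π / N))‖ := by
  have hN : (0 : ℝ) < N := Nat.cast_pos.2 i.pos
  have hi : ((i : ℕ) : ℝ) < N := Nat.cast_lt.2 i.2
  have hk : ((k : ℕ) : ℝ) < N := Nat.cast_lt.2 k.2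
  have hsub : (i + α) * (2 * π / N) - (k + α) * (2 * π / N) = (i - k) * (2 * π / N) := by ring
  refine one_le_mul_norm_one_sub_of_pow_eq_one i.pos.ne' ?_ fun h => hik (Fin.ext ?_)
  · have hangle : N * ((i - k) * (2 * π / N)) = (i : ℕ) * (2 * π) - (k : ℕ) * (2 * π) := by
      field_simp
    rw [hsub, ← circleMap_nat_mul, hangle, (periodic_circleMap 0 1).sub_nat_mul_eq,
      (periodic_circleMap 0 1).nat_mul_eq]
    simp [circleMap]
  · have hlt : |((i : ℕ) - (k : ℕ) : ℝ) * (2 * π / N) - 0| < 2 * π := by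
      rw [sub_zero, abs_mul, abs_of_pos (by positivity : 0 < 2 * π / N), ← mul_div_assoc,
        div_lt_iff₀ hN, mul_comm (2 * π)]
      gcongr
      exact abs_sub_lt_of_nonneg_of_lt (by positivity) hi (by positivity) hk
    have hzero := (circleMap_eq_iff_eq_of_abs_sub_lt hlt).1 (by rw [← hsub, h]; simp [circleMap])
    rw [mul_eq_zero_iff_right (by positivity), sub_eq_zero] at hzero
    exact_mod_cast hzero

namespace IsWellDistributed

variable {M α β : ℝ} {N : ℕ} {a b : Fin N → ℝ}

theorem norm_circleMap_sub_sub_le (ha : IsWellDistributed M α a) (hb : IsWellDistributed M β b)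
    (i j : Fin N) :
    ‖χ (a i - b j) - χ ((i + α) * (2 * π / N) - (j + β) * (2 * π / N))‖ ≤ 2 * M / N ^ 3 :=
  calc _ ≤ |a i - b j - ((i + α) * (2 * π / N) - (j + β) * (2 * π / N))| :=
        norm_circleMap_sub_le _ _
    _ = |(a i - (i + α) * (2 * π / N)) - (b j - (j + β) * (2 * π / N))| := by
        rw [sub_sub_sub_comm]
    _ ≤ M / N ^ 3 + M / N ^ 3 := (abs_sub _ _).trans (add_le_add (ha i) (hb j))
    _ = 2 * M / N ^ 3 := by ring

theorem one_le_mul_norm_circleMap_sub (ha : IsWellDistributed M α a) (hM : 4 * M ≤ N ^ 2)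
    {i k : Fin N} (hik : i ≠ k) :
    1 ≤ 2 * N * ‖χ (a i) - χ (a k)‖ := by
  have hN : (0 : ℝ) < N := Nat.cast_pos.2 i.pos
  set z := χ ((i + α) * (2 * π / N) - (k + α) * (2 * π / N))
  have hsep : 1 ≤ N * ‖1 - z‖ := one_le_mul_norm_one_sub_circleMap_equidistant α hik
  have hdist : ‖χ (a i - a k) - z‖ ≤ 1 / (2 * N) := by
    refine (norm_circleMap_sub_sub_le ha ha i k).trans ?_
    field_simp
    linarith
  have hquot : ‖χ (a i) - χ (a k)‖ = ‖1 - χ (a i - a k)‖ := by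
    rw [circleMap_sub, one_sub_div (circleMap_ne_center one_ne_zero), norm_div,
      norm_circleMap_zero, abs_one, div_one, norm_sub_rev]
  have htri : ‖1 - z‖ ≤ ‖1 - χ (a i - a k)‖ + ‖χ (a i - a k) - z‖ :=
    norm_sub_le_norm_sub_add_norm_sub _ _ _
  rw [le_div_iff₀ (by positivity)] at hdist
  rw [hquot]
  nlinarith

end IsWellDistributed

namespace IsStaggered

variable {M α β : ℝ} {N : ℕ} {a b : Fin N → ℝ}

theorem symm (h : IsStaggered M α β a b) : IsStaggered M β α b a where
  left := h.right
  right := h.left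
  opposite := by
    rw [← neg_sub, mul_neg, ← zero_sub, circleMap_sub, h.opposite]
    simp [circleMap]
  large := h.large

theorem exists_norm_circleMap_sub_le (h : IsStaggered M α β a b) (i : Fin N) :
    ∃ w η : ℂ, IsPrimitiveRoot w N ∧ η ^ N = -1 ∧
      ∀ j : Fin N, ‖χ (a i - b j) - η * w ^ (j : ℕ)‖ ≤ 2 * M / N ^ 3 := by
  have hN : (N : ℝ) ≠ 0 := Nat.cast_ne_zero.2 i.pos.ne'
  refine ⟨(χ (2 * π / N))⁻¹, χ ((i + α - β) * (2 * π / N)), ?_, ?_, fun j => ?_⟩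
  · have hroot : χ (2 * π / N) = Complex.exp (2 * π * Complex.I / N) := by
      rw [circleMap_zero, Complex.ofReal_one, one_mul]
      push_cast
      ring_nf
    rw [hroot]
    exact (Complex.isPrimitiveRoot_exp N i.pos.ne').inv
  · have hangle : N * ((i + α - β) * (2 * π / N)) = (i : ℕ) * (2 * π) + 2 * π * (α - β) := by
      field_simp
      ring
    rw [← circleMap_nat_mul, hangle, add_comm, (periodic_circleMap 0 1).nat_mul i, h.opposite]
  · convert h.left.norm_circleMap_sub_sub_le h.right i j using 3
    rw [inv_pow, ← div_eq_mul_inv, ← circleMap_nat_mul, ← circleMap_sub]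
    congr 1
    ring

theorem circleMap_sub_bounds (h : IsStaggered M α β a b) (i : Fin N) :
    (∀ j, χ (a i) ≠ χ (b j)) ∧ ‖∑ j, (1 - χ (a i - b j))⁻¹ - N / 2‖ ≤ M / N ∧
      |∑ j, ‖(1 - χ (a i - b j))⁻¹‖ ^ 2 - (N : ℝ) ^ 2 / 4| ≤ 3 * M / 2 := by
  have hN : (0 : ℝ) < N := Nat.cast_pos.2 i.pos
  obtain ⟨w, η, hw, hη, hζ⟩ := h.exists_norm_circleMap_sub_le i
  have hM₀ : 0 ≤ 2 * M / N ^ 3 := (norm_nonneg _).trans (hζ i)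
  have hδ : N * (2 * M / N ^ 3) ≤ 1 := by
    field_simp at hM₀ ⊢
    linarith [h.large]
  refine ⟨fun j heq => (inv_one_sub_bounds hw hη hδ hζ j).1 ?_, ?_, ?_⟩
  · rw [circleMap_sub, heq, div_self (circleMap_ne_center one_ne_zero), sub_self]
  · refine (norm_sum_inv_one_sub_sub_le hw hη hδ hζ).trans_eq ?_
    field_simp
  · refine (abs_sum_norm_inv_one_sub_sq_sub_le hw hη hδ hζ).trans_eq ?_
    field_simp
    ring

end IsStaggered

end Mesh

section PerturbedQuadrature

variable {E : Type*} [NormedAddCommGroup E] [NormedSpace ℝ E] {f : ℝ × ℝ → E}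

theorem hasDerivAt_fst_of_contDiff (hf : ContDiff ℝ 1 f) (s t : ℝ) :
    HasDerivAt (fun s => f (s, t)) (deriv (fun s => f (s, t)) s) s :=
  ((hf.differentiable one_ne_zero).comp (by fun_prop) s).hasDerivAt

theorem DoublyPeriodic.exists_norm_sub_le (hf : DoublyPeriodic f) (hf₁ : ContDiff ℝ 1 f) :
    ∃ C ≥ 0, ∀ s s' t, ‖f (s, t) - f (s', t)‖ ≤ C * |s - s'| := by
  obtain ⟨C, hC⟩ := hf.exists_norm_deriv_fst_le hf₁
  exact ⟨C, (norm_nonneg _).trans (hC 0 0), fun s s' t =>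
    convex_univ.norm_image_sub_le_of_norm_deriv_le (fun u _ =>
      (hasDerivAt_fst_of_contDiff hf₁ u t).differentiableAt) (fun u _ => hC u t)
        (mem_univ s') (mem_univ s)⟩

theorem DoublyPeriodic.exists_norm_smul_sum_sub_integral_le [CompleteSpace E]
    (hf : DoublyPeriodic f) (hf₂ : ContDiff ℝ 2 f) (M : ℝ) :
    ∃ C, ∀ {N : ℕ} [NeZero N] {β : ℝ} {b : Fin N → ℝ}, IsWellDistributed M β b → ∀ t,
      ‖(2 * π / N) • ∑ j, f (b j, t) - ∫ s in 0..2 * π, f (s, t)‖ ≤ C / N ^ 2 := by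
  have hf₁ : ContDiff ℝ 1 f := hf₂.of_le one_le_two
  obtain ⟨C₁, hC₁, hlip⟩ := hf.exists_norm_sub_le hf₁
  obtain ⟨C₂, -, hlip'⟩ := hf.deriv_fst.exists_norm_sub_le (contDiff_deriv_fst (n := 1) hf₂)
  refine ⟨2 * π * C₁ * M + C₂ * (2 * π) ^ 3 / 4, fun {N} _ β b hb t => ?_⟩
  have hN : (1 : ℝ) ≤ N := Nat.one_le_cast.2 (NeZero.one_le)
  have hM : 0 ≤ M / N ^ 3 := (abs_nonneg _).trans (hb 0)
  have hM₀ : 0 ≤ M := by simpa [le_div_iff₀ (by positivity : (0 : ℝ) < N ^ 3)] using hM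
  have hmid := norm_smul_sum_sub_integral_le_of_periodic two_pi_pos.le
    (fun s => hasDerivAt_fst_of_contDiff hf₁ s t) (fun s s' => hlip' s s' t) (hf.fst t) β N
  have hnodes : ‖(2 * π / N) • ∑ j, f (b j, t) -
      (2 * π / N) • ∑ j : Fin N, f ((j + β) * (2 * π / N), t)‖ ≤ 2 * π * C₁ * M / N ^ 2 :=
    calc _ = 2 * π / N * ‖∑ j : Fin N, (f (b j, t) - f ((j + β) * (2 * π / N), t))‖ := by
          rw [← smul_sub, ← Finset.sum_sub_distrib, norm_smul, Real.norm_of_nonneg (by positivity)]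
      _ ≤ 2 * π / N * ∑ j : Fin N, C₁ * (M / N ^ 3) := by
          gcongr
          exact norm_sum_le_of_le _ fun j _ =>
            (hlip _ _ t).trans (mul_le_mul_of_nonneg_left (hb j) hC₁)
      _ = 2 * π * C₁ * M / N ^ 3 := by
          rw [Fin.sum_const, nsmul_eq_mul]
          field_simp
      _ ≤ 2 * π * C₁ * M / N ^ 2 := by gcongr; norm_num
  calc _ ≤ 2 * π * C₁ * M / N ^ 2 + C₂ * (2 * π) ^ 3 / (4 * N ^ 2) :=
        (norm_sub_le_norm_sub_add_norm_sub _ _ _).trans (add_le_add hnodes hmid)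
    _ = _ := by ring

end PerturbedQuadrature

section CircleKernel

theorem cauchyKernel_circleMap (s t : ℝ) :
    cauchyKernel χ s t = Complex.I * (1 - χ (t - s))⁻¹ := by
  have hs : χ s ≠ 0 := circleMap_ne_center one_ne_zero
  rw [cauchyKernel, circleMap_sub, one_sub_div hs, inv_div, deriv_circleMap, mul_comm,
    mul_div_assoc]

theorem cauchyKernel_circleMap_mul_swap (s t : ℝ) :
    cauchyKernel χ s t * cauchyKernel χ t s = -(‖(1 - χ (s - t))⁻¹‖ ^ 2 : ℝ) := by
  have hconj : (1 - χ (t - s))⁻¹ = conj (1 - χ (s - t))⁻¹ := by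
    rw [map_inv₀, map_sub, map_one, conj_circleMap, map_zero, neg_sub]
  rw [cauchyKernel_circleMap, cauchyKernel_circleMap, hconj, Complex.ofReal_pow,
    ← Complex.conj_mul']
  linear_combination (conj (1 - χ (s - t))⁻¹ * (1 - χ (s - t))⁻¹) * Complex.I_mul_I

end CircleKernel

section Entries

variable {l : ℝ → ℂ}

/- Partial fractions: summed over `u`, the right-hand side contains a difference of two column sums
that have the same limit. -/
theorem cauchyKernel_mul_cauchyKernel {s t u : ℝ} (hst : l s ≠ l t) (hsu : l s ≠ l u)
    (hut : l u ≠ l t) :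
    cauchyKernel l s u * cauchyKernel l u t =
      cauchyKernel l s t * (cauchyKernel l u t - cauchyKernel l u s) := by
  simp only [cauchyKernel]
  rw [← neg_sub (l s) (l u)]
  field [sub_ne_zero.2 hst, sub_ne_zero.2 hsu, sub_ne_zero.2 hut]

namespace IsSimpleLoop

theorem exists_norm_cauchyKernel_mul_le (hl : IsSimpleLoop l) :
    ∃ C ≥ 0, ∀ s t, χ s ≠ χ t → ‖cauchyKernel l s t‖ * ‖χ s - χ t‖ ≤ C := by
  have hper : DoublyPeriodic fun p => deriv l p.1 / chordRatio l p :=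
    ⟨fun t s => congrArg₂ (· / ·) (hl.periodic_deriv s) (hl.doublyPeriodic_chordRatio.fst t s),
      fun s t => congrArg (_ / ·) (hl.doublyPeriodic_chordRatio.snd s t)⟩
  have hcont : Continuous fun p => deriv l p.1 / chordRatio l p :=
    ((hl.contDiff.continuous_deriv (by norm_num)).comp continuous_fst).div
      hl.contDiff_chordRatio.continuous hl.chordRatio_ne_zero
  obtain ⟨C, hC⟩ := hper.exists_norm_le hcont
  refine ⟨C, (norm_nonneg _).trans (hC 0), fun s t hst => ?_⟩
  rw [← norm_mul, cauchyKernel, ← hl.chordRatio_mul, div_mul_eq_div_div,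
    div_mul_cancel₀ _ (sub_ne_zero.2 hst)]
  exact hC (s, t)

theorem exists_norm_sum_cauchyKernel_mul_swap_add_le (hl : IsSimpleLoop l) (M : ℝ) :
    ∃ C, ∀ {N : ℕ} {α β : ℝ} {a b : Fin N → ℝ}, IsStaggered M α β a b → ∀ i,
      ‖(2 * π / N) ^ 2 * ∑ j, cauchyKernel l (a i) (b j) * cauchyKernel l (b j) (a i) + π ^ 2‖
        ≤ C / N := by
  obtain ⟨C, hC⟩ := hl.doublyPeriodic_kernelCorrection.exists_norm_deriv_snd_le
    (hl.contDiff_kernelCorrection.of_le one_le_two)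
  refine ⟨(2 * π) ^ 2 * (3 * M / 2 + C), fun {N α β a b} h i => ?_⟩
  obtain ⟨hne, -, hsum⟩ := h.circleMap_sub_bounds i
  have hN : (1 : ℝ) ≤ N := Nat.one_le_cast.2 i.pos
  have hM : 0 ≤ 3 * M / 2 := (abs_nonneg _).trans hsum
  set S : ℝ := ∑ j, ‖(1 - χ (a i - b j))⁻¹‖ ^ 2 with hS
  set D := ∑ j, deriv (fun t => kernelCorrection l (a i, t)) (b j)
  have hD : ‖D‖ ≤ N * C := by
    simpa using norm_sum_le_of_le Finset.univ fun j _ => hC (a i) (b j)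
  have hsplit : ∑ j, cauchyKernel l (a i) (b j) * cauchyKernel l (b j) (a i) = -S - D := by
    simp only [hl.cauchyKernel_mul_cauchyKernel_swap (hne _), cauchyKernel_circleMap_mul_swap,
      Finset.sum_sub_distrib, Finset.sum_neg_distrib, hS, Complex.ofReal_sum, D]
  have hN₀ : (N : ℂ) ≠ 0 := by exact_mod_cast (zero_lt_one.trans_le hN).ne'
  calc _ = ‖(((2 * π / N) ^ 2 : ℝ) : ℂ) * (((S - N ^ 2 / 4 : ℝ) : ℂ) + D)‖ := by
        rw [hsplit, ← norm_neg]
        push_cast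
        field_simp
        ring_nf
    _ ≤ (2 * π / N) ^ 2 * (3 * M / 2 + N * C) := by
        rw [norm_mul, Complex.norm_real, Real.norm_of_nonneg (by positivity)]
        gcongr
        exact (norm_add_le _ _).trans (add_le_add ((Complex.norm_real _).trans_le hsum) hD)
    _ ≤ (2 * π / N) ^ 2 * (N * (3 * M / 2 + C)) := by
        gcongr
        nlinarith
    _ = _ := by field_simp

theorem exists_norm_sum_cauchyKernel_sub_le (hl : IsSimpleLoop l)
    (hmean : ∀ t, ∫ s in 0..2 * π, kernelCorrection l (s, t) = 0) (M : ℝ) :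
    ∃ C, ∀ {N : ℕ} {α β : ℝ} {a b : Fin N → ℝ}, IsStaggered M α β a b → ∀ i,
      ‖2 * π / N * ∑ j, cauchyKernel l (b j) (a i) - π * Complex.I‖ ≤ C / N ^ 2 := by
  obtain ⟨C, hC⟩ := hl.doublyPeriodic_kernelCorrection.exists_norm_smul_sum_sub_integral_le
    hl.contDiff_kernelCorrection M
  refine ⟨2 * π * M + C, fun {N α β a b} h i => ?_⟩
  obtain ⟨hne, hsum, -⟩ := h.circleMap_sub_bounds i
  have : NeZero N := ⟨i.pos.ne'⟩
  have hcorr := hC h.right (a i)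
  rw [hmean, sub_zero, Complex.real_smul] at hcorr
  have hN : (N : ℂ) ≠ 0 := Nat.cast_ne_zero.2 i.pos.ne'
  set S := ∑ j, (1 - χ (a i - b j))⁻¹ with hS
  have hsplit : ∑ j, cauchyKernel l (b j) (a i) =
      Complex.I * S + ∑ j, kernelCorrection l (b j, a i) := by
    simp only [hl.cauchyKernel_eq_add (hne _).symm, cauchyKernel_circleMap,
      Finset.sum_add_distrib, ← Finset.mul_sum, hS]
  calc _ = ‖((2 * π / N : ℝ) : ℂ) * Complex.I * (S - N / 2) +
        ((2 * π / N : ℝ) : ℂ) * ∑ j, kernelCorrection l (b j, a i)‖ := by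
        rw [hsplit]
        push_cast
        congr 1
        field
    _ ≤ 2 * π / N * (M / N) + C / N ^ 2 := by
        refine (norm_add_le _ _).trans (add_le_add ?_ hcorr)
        rw [norm_mul, norm_mul, Complex.norm_real, Complex.norm_I, mul_one,
          Real.norm_of_nonneg (by positivity)]
        gcongr
    _ = _ := by ring

theorem exists_norm_sum_cauchyKernel_mul_cauchyKernel_le (hl : IsSimpleLoop l)
    (hmean : ∀ t, ∫ s in 0..2 * π, kernelCorrection l (s, t) = 0) (M : ℝ) :
    ∃ C, ∀ {N : ℕ} {α β : ℝ} {a b : Fin N → ℝ}, IsStaggered M α β a b → ∀ i k, i ≠ k →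
      ‖(2 * π / N) ^ 2 * ∑ j, cauchyKernel l (a i) (b j) * cauchyKernel l (b j) (a k)‖
        ≤ C / N ^ 2 := by
  obtain ⟨C₁, hC₁, hker⟩ := hl.exists_norm_cauchyKernel_mul_le
  obtain ⟨C₂, hcol⟩ := hl.exists_norm_sum_cauchyKernel_sub_le hmean M
  refine ⟨2 * π * (2 * C₁) * (2 * C₂), fun {N α β a b} h i k hik => ?_⟩
  have hN : (0 : ℝ) < N := Nat.cast_pos.2 i.pos
  have hsep : 1 ≤ 2 * N * ‖χ (a i) - χ (a k)‖ := h.left.one_le_mul_norm_circleMap_sub h.large hik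
  have hne : χ (a i) ≠ χ (a k) := fun heq => by
    rw [heq, sub_self, norm_zero, mul_zero] at hsep
    linarith
  have hbound : ‖cauchyKernel l (a i) (a k)‖ ≤ 2 * C₁ * N :=
    calc _ ≤ ‖cauchyKernel l (a i) (a k)‖ * (2 * N * ‖χ (a i) - χ (a k)‖) :=
          le_mul_of_one_le_right (norm_nonneg _) hsep
      _ = 2 * N * (‖cauchyKernel l (a i) (a k)‖ * ‖χ (a i) - χ (a k)‖) := by ring
      _ ≤ 2 * N * C₁ := by gcongr; exact hker _ _ hne
      _ = 2 * C₁ * N := by ring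
  have hfactor : ∑ j, cauchyKernel l (a i) (b j) * cauchyKernel l (b j) (a k) =
      cauchyKernel l (a i) (a k) *
        (∑ j, cauchyKernel l (b j) (a k) - ∑ j, cauchyKernel l (b j) (a i)) := by
    rw [← Finset.sum_sub_distrib, Finset.mul_sum]
    exact Finset.sum_congr rfl fun j _ => cauchyKernel_mul_cauchyKernel (mt hl.eq_iff.1 hne)
      (mt hl.eq_iff.1 ((h.circleMap_sub_bounds i).1 j))
      (mt hl.eq_iff.1 ((h.circleMap_sub_bounds k).1 j).symm)
  calc _ = ‖((2 * π / N : ℝ) : ℂ) * cauchyKernel l (a i) (a k) *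
        ((2 * π / N * ∑ j, cauchyKernel l (b j) (a k) - π * Complex.I) -
          (2 * π / N * ∑ j, cauchyKernel l (b j) (a i) - π * Complex.I))‖ := by
        rw [hfactor]
        push_cast
        ring_nf
    _ ≤ 2 * π / N * (2 * C₁ * N) * (C₂ / N ^ 2 + C₂ / N ^ 2) := by
        rw [norm_mul, norm_mul, Complex.norm_real, Real.norm_of_nonneg (by positivity)]
        gcongr
        exact (norm_sub_le _ _).trans (add_le_add (hcol h k) (hcol h i))
    _ = _ := by
        field_simp
        ring

end IsSimpleLoop

end Entries

/-- The matrix of the Cauchy kernel sampled at the nodes `a` and `b`, i.e. `B + i A`. -/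
noncomputable def cauchyMatrix (l : ℝ → ℂ) {N : ℕ} (a b : Fin N → ℝ) :
    Matrix (Fin N) (Fin N) ℂ :=
  Matrix.of fun i j => cauchyKernel l (a i) (b j)

/-- The error `(L / N)² (B + i A) (B̃ + i Ã) + π²` in the discretized Poincaré–Bertrand formula for
a curve with period `L`. -/
noncomputable def poincareBertrandError (L : ℝ) (l : ℝ → ℂ) {N : ℕ} (a b : Fin N → ℝ) :
    Matrix (Fin N) (Fin N) ℂ :=
  (L / N : ℂ) ^ 2 • (cauchyMatrix l a b * cauchyMatrix l b a) + (π : ℂ) ^ 2 • 1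

section ErrorMatrix

variable {l : ℝ → ℂ} {N : ℕ}

theorem poincareBertrandError_apply (L : ℝ) (l : ℝ → ℂ) (a b : Fin N → ℝ) (i k : Fin N) :
    poincareBertrandError L l a b i k =
      (L / N) ^ 2 * ∑ j, cauchyKernel l (a i) (b j) * cauchyKernel l (b j) (a k) +
        if i = k then (π : ℂ) ^ 2 else 0 := by
  simp [poincareBertrandError, cauchyMatrix, Matrix.mul_apply, Matrix.one_apply]

theorem poincareBertrandError_comp_mul (L : ℝ) (l : ℝ → ℂ) (c : ℝ) (a b : Fin N → ℝ) :
    poincareBertrandError L (fun s => l (c * s)) a b =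
      poincareBertrandError (c * L) l (fun i => c * a i) (fun j => c * b j) := by
  have hker (s t : ℝ) :
      cauchyKernel (fun s => l (c * s)) s t = c * cauchyKernel l (c * s) (c * t) := by
    simp only [cauchyKernel, deriv_comp_mul_left, Complex.real_smul, mul_div_assoc]
  ext i k
  simp only [poincareBertrandError_apply, hker, Finset.mul_sum, Complex.ofReal_mul]
  congr 1
  exact Finset.sum_congr rfl fun j _ => by ring

theorem deriv_conj_comp (l : ℝ → ℂ) (s : ℝ) : deriv (conj ∘ l) s = conj (deriv l s) := deriv.star

theorem cauchyKernel_conj (l : ℝ → ℂ) (s t : ℝ) :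
    cauchyKernel (conj ∘ l) s t = conj (cauchyKernel l s t) := by
  simp only [cauchyKernel, deriv_conj_comp, comp_apply, map_div₀, map_sub]

theorem norm_poincareBertrandError_conj (L : ℝ) (l : ℝ → ℂ) (a b : Fin N → ℝ) (i k : Fin N) :
    ‖poincareBertrandError L (conj ∘ l) a b i k‖ = ‖poincareBertrandError L l a b i k‖ := by
  rw [← RCLike.norm_conj (poincareBertrandError L l a b i k), poincareBertrandError_apply,
    poincareBertrandError_apply]
  split_ifs <;> simp [cauchyKernel_conj]

namespace IsSimpleLoop

theorem conj_comp (hl : IsSimpleLoop l) : IsSimpleLoop (conj ∘ l) where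
  contDiff := Complex.conjCLE.contDiff.comp hl.contDiff
  periodic := hl.periodic.comp _
  deriv_ne_zero s := deriv_conj_comp l s ▸ (map_ne_zero _).2 (hl.deriv_ne_zero s)
  circleMap_eq h := hl.circleMap_eq (star_injective h)

theorem exists_norm_poincareBertrandError_le_of_im_pos (hl : IsSimpleLoop l) {s₀ : ℝ}
    (hmax : ∀ s, (l s).re ≤ (l s₀).re) (hpos : 0 < (deriv l s₀).im) (M : ℝ) :
    ∃ C > (0 : ℝ), ∀ {N : ℕ} {α β : ℝ} {a b : Fin N → ℝ}, IsStaggered M α β a b → ∀ i k,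
      ‖poincareBertrandError (2 * π) l a b i k‖ ≤ C / N ^ 2 + if i = k then C / N else 0 := by
  obtain ⟨C₁, hdiag⟩ := hl.exists_norm_sum_cauchyKernel_mul_swap_add_le M
  obtain ⟨C₂, hoff⟩ := hl.exists_norm_sum_cauchyKernel_mul_cauchyKernel_le
    (hl.integral_kernelCorrection_eq_zero hmax hpos) M
  refine ⟨|C₁| + |C₂| + 1, by positivity, fun {N α β a b} h i k => ?_⟩
  rw [poincareBertrandError_apply]
  push_cast
  split_ifs with hik
  · subst hik
    calc _ ≤ C₁ / N := hdiag h i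
      _ ≤ (|C₁| + |C₂| + 1) / N := by gcongr; linarith [le_abs_self C₁, abs_nonneg C₂]
      _ ≤ _ := le_add_of_nonneg_left (by positivity)
  · rw [add_zero, add_zero]
    refine (hoff h i k hik).trans ?_
    gcongr
    linarith [le_abs_self C₂, abs_nonneg C₁]

theorem exists_norm_poincareBertrandError_le (hl : IsSimpleLoop l) (M : ℝ) :
    ∃ C > (0 : ℝ), ∀ {N : ℕ} {α β : ℝ} {a b : Fin N → ℝ}, IsStaggered M α β a b → ∀ i k,
      ‖poincareBertrandError (2 * π) l a b i k‖ ≤ C / N ^ 2 + if i = k then C / N else 0 := by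
  obtain ⟨s₀, hmax⟩ := hl.exists_forall_re_le
  /- Complex conjugation reverses the orientation of the curve. -/
  rcases lt_trichotomy (deriv l s₀).im 0 with hneg | hzero | hpos
  · obtain ⟨C, hC, hbound⟩ := hl.conj_comp.exists_norm_poincareBertrandError_le_of_im_pos
      (s₀ := s₀) (by simpa using hmax) (by simpa [deriv_conj_comp] using hneg) M
    exact ⟨C, hC, fun h i k => norm_poincareBertrandError_conj _ l _ _ i k ▸ hbound h i k⟩
  · exact absurd (Complex.ext (hl.re_deriv_eq_zero hmax) hzero) (hl.deriv_ne_zero s₀)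
  · exact hl.exists_norm_poincareBertrandError_le_of_im_pos hmax hpos M

end IsSimpleLoop

end ErrorMatrix

section Rescaling

theorem isSimpleLoop_comp_mul {l : ℝ → ℂ} {L : ℝ} (hL : 0 < L) (hl : ContDiff ℝ 4 l)
    (hper : Periodic l L) (hne : ∀ s, deriv l s ≠ 0) (hinj : InjOn l (Ico 0 L)) :
    IsSimpleLoop fun s => l (L / (2 * π) * s) where
  contDiff := hl.comp (by fun_prop)
  periodic := by
    have hperiod : (L / (2 * π))⁻¹ * L = 2 * π := by field
    simpa only [hperiod] using hper.const_mul (L / (2 * π))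
  deriv_ne_zero s := by
    rw [deriv_comp_mul_left]
    exact smul_ne_zero (by positivity) (hne _)
  circleMap_eq {s t} hst := by
    have hper₂ : Periodic (fun s => (l (L / (2 * π) * s), χ s)) (2 * π) := fun s =>
      Prod.ext (by simp only [mul_add, div_mul_cancel₀ _ two_pi_pos.ne', hper _])
        (periodic_circleMap 0 1 s)
    have hmem {u : ℝ} (hu : u ∈ Ico 0 (2 * π)) : L / (2 * π) * u ∈ Ico 0 L := by
      refine ⟨mul_nonneg (by positivity) hu.1, ?_⟩
      rw [div_mul_eq_mul_div, div_lt_iff₀ two_pi_pos]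
      exact mul_lt_mul_of_pos_left hu.2 hL
    obtain ⟨s', hs', hs⟩ := hper₂.exists_mem_Ico₀ two_pi_pos s
    obtain ⟨t', ht', ht⟩ := hper₂.exists_mem_Ico₀ two_pi_pos t
    rw [Prod.mk.injEq] at hs ht
    have heq := hinj (hmem hs') (hmem ht') (hs.1.symm.trans (hst.trans ht.1))
    rw [hs.2, ht.2, mul_left_cancel₀ (by positivity) heq]

theorem isWellDistributed_const_mul {L M α : ℝ} (hL : 0 < L) {κ : ℕ} (hκ : 2 ≤ κ) {N : ℕ}
    {a : Fin N → ℝ} (ha : ∀ j : Fin N, |a j - (j + α) * L / N| ≤ M / N ^ (κ + 1)) :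
    IsWellDistributed (2 * π / L * M) α fun j => 2 * π / L * a j := by
  intro j
  have hscale : 0 < 2 * π / L := by positivity
  have hN : (1 : ℝ) ≤ N := Nat.one_le_cast.2 j.pos
  have hM : 0 ≤ M := by
    simpa [le_div_iff₀ (by positivity : (0 : ℝ) < N ^ (κ + 1))] using (abs_nonneg _).trans (ha j)
  calc |2 * π / L * a j - (j + α) * (2 * π / N)| = 2 * π / L * |a j - (j + α) * L / N| := by
        nth_rw 2 [← abs_of_pos hscale]
        rw [← abs_mul]
        congr 1
        field
    _ ≤ 2 * π / L * (M / N ^ 3) := by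
        gcongr
        exact (ha j).trans (div_le_div_of_nonneg_left hM (by positivity)
          (pow_le_pow_right₀ hN (by omega)))
    _ = 2 * π / L * M / N ^ 3 := (mul_div_assoc _ _ _).symm

theorem exists_forall_isStaggered {L M : ℝ} (hL : 0 < L) {κ : ℕ} (hκ : 2 ≤ κ)
    {a b : (N : ℕ) → Fin N → ℝ}
    (ha : ∀ N, 2 ≤ N → ∀ j : Fin N, |a N j - (j + 1 / 2) * L / N| ≤ M / N ^ (κ + 1))
    (hb : ∀ N, 2 ≤ N → ∀ j : Fin N, |b N j - j * L / N| ≤ M / N ^ (κ + 1)) :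
    ∃ N₀, ∀ N ≥ N₀, IsStaggered (2 * π / L * M) (1 / 2) 0
      (fun j => 2 * π / L * a N j) (fun j => 2 * π / L * b N j) := by
  obtain ⟨N₁, hN₁⟩ := exists_nat_ge (4 * (2 * π / L * M))
  refine ⟨max 2 N₁, fun N hN => ⟨isWellDistributed_const_mul hL hκ (ha N (le_of_max_le_left hN)),
    isWellDistributed_const_mul hL hκ fun j => ?_, ?_, ?_⟩⟩
  · simpa using hb N (le_of_max_le_left hN) j
  · rw [sub_zero, mul_one_div, mul_div_cancel_left₀ _ two_ne_zero]
    simp [circleMap_zero]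
  · have hN' : (N₁ : ℝ) ≤ N := Nat.cast_le.2 (le_of_max_le_right hN)
    exact hN₁.trans (hN'.trans (le_self_pow₀ (Nat.one_le_cast.2 (by omega)) two_ne_zero))

end Rescaling

section MeanSquareNorm

variable {N : ℕ}

theorem l2norm_le_of_abs_le {ε : ℝ} (hε : 0 ≤ ε) {y z : Fin N → ℝ}
    (h : ∀ i, |y i| ≤ ε * (|z i| + (N : ℝ)⁻¹ * ∑ k, |z k|)) : l2norm y ≤ 2 * ε * l2norm z := by
  set m := (N : ℝ)⁻¹ * ∑ k, |z k| with hm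
  have hmean : m ^ 2 ≤ (N : ℝ)⁻¹ * ∑ i, z i ^ 2 := by
    have hcs : (∑ k, |z k|) ^ 2 ≤ N * ∑ k, z k ^ 2 := by
      simpa using sq_sum_le_card_mul_sum_sq (s := Finset.univ) (f := fun k => |z k|)
    calc m ^ 2 ≤ (N : ℝ)⁻¹ ^ 2 * (N * ∑ k, z k ^ 2) := by rw [hm, mul_pow]; gcongr
      _ = _ := by field
  have hpoint (i : Fin N) : y i ^ 2 ≤ 2 * ε ^ 2 * (z i ^ 2 + m ^ 2) :=
    calc y i ^ 2 ≤ (ε * (|z i| + m)) ^ 2 := sq_le_sq' (neg_le_of_abs_le (h i)) (le_of_abs_le (h i))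
      _ ≤ _ := by
        rw [mul_pow, mul_assoc, mul_left_comm, ← sq_abs (z i)]
        gcongr
        exact add_sq_le
  rw [l2norm, l2norm, ← Real.sqrt_sq (by positivity : 0 ≤ 2 * ε), ← Real.sqrt_mul (sq_nonneg _)]
  refine Real.sqrt_le_sqrt ?_
  calc (N : ℝ)⁻¹ * ∑ i, y i ^ 2 ≤ (N : ℝ)⁻¹ * ∑ i, 2 * ε ^ 2 * (z i ^ 2 + m ^ 2) := by
        gcongr with i
        exact hpoint i
    _ = 2 * ε ^ 2 * ((N : ℝ)⁻¹ * ∑ i, z i ^ 2 + (N : ℝ)⁻¹ * N * m ^ 2) := by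
        rw [← Finset.mul_sum, Finset.sum_add_distrib, Fin.sum_const, nsmul_eq_mul]
        ring
    _ ≤ 2 * ε ^ 2 * ((N : ℝ)⁻¹ * ∑ i, z i ^ 2 + 1 * ((N : ℝ)⁻¹ * ∑ i, z i ^ 2)) := by
        gcongr
        exact inv_mul_le_one
    _ = _ := by ring

theorem norm_mulVec_le {C : ℝ} {E : Matrix (Fin N) (Fin N) ℂ}
    (hE : ∀ i k, ‖E i k‖ ≤ C / N ^ 2 + if i = k then C / N else 0) (z : Fin N → ℝ) (i : Fin N) :
    ‖E.mulVec (fun k => (z k : ℂ)) i‖ ≤ C / N * (|z i| + (N : ℝ)⁻¹ * ∑ k, |z k|) :=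
  calc _ ≤ ∑ k, (C / N ^ 2 + if i = k then C / N else 0) * |z k| := by
        refine norm_sum_le_of_le (Finset.univ : Finset (Fin N)) fun k _ => ?_
        rw [norm_mul, Complex.norm_real, Real.norm_eq_abs]
        exact mul_le_mul_of_nonneg_right (hE i k) (abs_nonneg _)
    _ = _ := by
        simp only [add_mul, ite_mul, zero_mul, Finset.sum_add_distrib, ← Finset.mul_sum,
          Finset.sum_ite_eq, Finset.mem_univ, if_true]
        ring

theorem l2norm_re_add_l2norm_im_mulVec_le {C : ℝ} (hC : 0 ≤ C) {E : Matrix (Fin N) (Fin N) ℂ}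
    (hE : ∀ i k, ‖E i k‖ ≤ C / N ^ 2 + if i = k then C / N else 0) (z : Fin N → ℝ) :
    l2norm (fun i => (E.mulVec (fun k => (z k : ℂ)) i).re) +
      l2norm (fun i => (E.mulVec (fun k => (z k : ℂ)) i).im) ≤ 4 * C / N * l2norm z := by
  have hε : 0 ≤ C / N := by positivity
  have hre := l2norm_le_of_abs_le hε fun i =>
    (Complex.abs_re_le_norm _).trans (norm_mulVec_le hE z i)
  have him := l2norm_le_of_abs_le hε fun i =>
    (Complex.abs_im_le_norm _).trans (norm_mulVec_le hE z i)
  exact (add_le_add hre him).trans_eq (by ring)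

end MeanSquareNorm

section RealMatrices

variable (l : ℝ → ℂ) {N : ℕ} (a b : Fin N → ℝ)

theorem re_cauchyMatrix_apply (i j : Fin N) : (cauchyMatrix l a b i j).re = Bmat l a b i j := by
  simp only [cauchyMatrix, cauchyKernel, Bmat, Matrix.of_apply, dotR, Complex.div_re,
    Complex.normSq_eq_norm_sq]
  ring

theorem im_cauchyMatrix_apply (i j : Fin N) : (cauchyMatrix l a b i j).im = Amat l a b i j := by
  simp only [cauchyMatrix, cauchyKernel, Amat, Matrix.of_apply, dotR, normalv, Complex.div_im,
    Complex.normSq_eq_norm_sq, Complex.mul_re, Complex.mul_im, Complex.neg_re, Complex.neg_im,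
    Complex.I_re, Complex.I_im]
  ring

theorem re_cauchyMatrix_mul_apply (i k : Fin N) :
    ((cauchyMatrix l a b * cauchyMatrix l b a) i k).re =
      (Bmat l a b * Bmat l b a - Amat l a b * Amat l b a) i k := by
  simp only [Matrix.mul_apply, Matrix.sub_apply, Complex.re_sum, Complex.mul_re,
    re_cauchyMatrix_apply, im_cauchyMatrix_apply, Finset.sum_sub_distrib]

theorem im_cauchyMatrix_mul_apply (i k : Fin N) :
    ((cauchyMatrix l a b * cauchyMatrix l b a) i k).im =
      (Amat l a b * Bmat l b a + Bmat l a b * Amat l b a) i k := by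
  simp only [Matrix.mul_apply, Matrix.add_apply, Complex.im_sum, Complex.mul_im,
    re_cauchyMatrix_apply, im_cauchyMatrix_apply, Finset.sum_add_distrib]
  exact add_comm _ _

theorem poincareBertrandError_mulVec_apply (L : ℝ) (z : Fin N → ℝ) (i : Fin N) :
    (poincareBertrandError L l a b).mulVec (fun k => (z k : ℂ)) i =
      ((L ^ 2 / N ^ 2 : ℝ) : ℂ) *
        ∑ k, (cauchyMatrix l a b * cauchyMatrix l b a) i k * z k + (π ^ 2 * z i : ℝ) := by
  rw [poincareBertrandError, Matrix.add_mulVec, Matrix.smul_mulVec, Matrix.smul_mulVec,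
    Matrix.one_mulVec]
  simp [div_pow, Matrix.mulVec, dotProduct]

theorem re_poincareBertrandError_mulVec (L : ℝ) (z : Fin N → ℝ) (i : Fin N) :
    ((poincareBertrandError L l a b).mulVec (fun k => (z k : ℂ)) i).re = L ^ 2 / N ^ 2 *
      ((Bmat l a b * Bmat l b a - Amat l a b * Amat l b a).mulVec z i) + π ^ 2 * z i := by
  rw [poincareBertrandError_mulVec_apply]
  simp only [Complex.add_re, Complex.re_ofReal_mul,
    Complex.re_sum, Complex.re_mul_ofReal, re_cauchyMatrix_mul_apply, Complex.ofReal_re,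
    Matrix.mulVec, dotProduct]

theorem im_poincareBertrandError_mulVec (L : ℝ) (z : Fin N → ℝ) (i : Fin N) :
    ((poincareBertrandError L l a b).mulVec (fun k => (z k : ℂ)) i).im = L ^ 2 / N ^ 2 *
      ((Amat l a b * Bmat l b a + Bmat l a b * Amat l b a).mulVec z i) := by
  rw [poincareBertrandError_mulVec_apply]
  simp only [Complex.add_im, Complex.im_ofReal_mul,
    Complex.im_sum, Complex.im_mul_ofReal, im_cauchyMatrix_mul_apply, Complex.ofReal_im, add_zero,
    Matrix.mulVec, dotProduct]

end RealMatrices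

theorem discretized_poincare_bertrand_general
    (L : ℝ) (hL : 0 < L) (l : ℝ → ℂ)
    (hsm : ContDiff ℝ 4 l) (hper : ∀ s, l (s + L) = l s)
    (hreg : ∀ s, deriv l s ≠ 0) (hinj : Set.InjOn l (Set.Ico 0 L))
    (κ : ℕ) (hκ : 2 ≤ κ) (M : ℝ) (ms mst : (N : ℕ) → Fin N → ℝ)
    (hms : ∀ N, 2 ≤ N → ∀ i : Fin N,
      |ms N i - ((i : ℕ) : ℝ) * L / (N : ℝ)| ≤ M / (N : ℝ) ^ (κ + 1))
    (hmst : ∀ N, 2 ≤ N → ∀ i : Fin N,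
      |mst N i - (((i : ℕ) : ℝ) + 1/2) * L / (N : ℝ)| ≤ M / (N : ℝ) ^ (κ + 1)) :
    ∃ C > 0, ∃ N₀ : ℕ, ∀ N : ℕ, N₀ ≤ N → ∀ z : Fin N → ℝ,
      (l2norm (fun i => (L ^ 2 / (N : ℝ) ^ 2) *
            ((Bmat l (mst N) (ms N) * Bmat l (ms N) (mst N)
              - Amat l (mst N) (ms N) * Amat l (ms N) (mst N)).mulVec z i) + π ^ 2 * z i)
        + l2norm (fun i => (L ^ 2 / (N : ℝ) ^ 2) *
            ((Amat l (mst N) (ms N) * Bmat l (ms N) (mst N)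
              + Bmat l (mst N) (ms N) * Amat l (ms N) (mst N)).mulVec z i))
        ≤ C / (N : ℝ) * l2norm z) ∧
      (l2norm (fun i => (L ^ 2 / (N : ℝ) ^ 2) *
            ((Bmat l (ms N) (mst N) * Bmat l (mst N) (ms N)
              - Amat l (ms N) (mst N) * Amat l (mst N) (ms N)).mulVec z i) + π ^ 2 * z i)
        + l2norm (fun i => (L ^ 2 / (N : ℝ) ^ 2) *
            ((Amat l (ms N) (mst N) * Bmat l (mst N) (ms N)
              + Bmat l (ms N) (mst N) * Amat l (mst N) (ms N)).mulVec z i))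
        ≤ C / (N : ℝ) * l2norm z) := by
  have hloop := isSimpleLoop_comp_mul hL hsm hper hreg hinj
  obtain ⟨C, hC, hentry⟩ := hloop.exists_norm_poincareBertrandError_le (2 * π / L * M)
  obtain ⟨N₀, hmesh⟩ := exists_forall_isStaggered hL hκ hmst hms
  have hrescale {N : ℕ} (a b : Fin N → ℝ) :
      poincareBertrandError (2 * π) (fun s => l (L / (2 * π) * s)) (fun j => 2 * π / L * a j)
        (fun j => 2 * π / L * b j) = poincareBertrandError L l a b := by
    have hinv (x : ℝ) : L / (2 * π) * (2 * π / L * x) = x := by field_simp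
    simp only [poincareBertrandError_comp_mul, hinv, div_mul_cancel₀ L two_pi_pos.ne']
  simp only [← re_poincareBertrandError_mulVec, ← im_poincareBertrandError_mulVec]
  refine ⟨4 * C, by positivity, N₀, fun N hN z => ⟨?_, ?_⟩⟩
  · exact l2norm_re_add_l2norm_im_mulVec_le hC.le (hrescale _ _ ▸ hentry (hmesh N hN)) z
  · exact l2norm_re_add_l2norm_im_mulVec_le hC.le (hrescale _ _ ▸ hentry (hmesh N hN).symm) z

/-- Approximation of the Poincaré–Bertrand identities by the discretized operators. -/
theorem discretized_poincare_bertrand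
    (L : ℝ) (hL : 0 < L) (l : ℝ → ℂ)
    (hsm : ContDiff ℝ (⊤ : ℕ∞) l) (hper : ∀ s, l (s + L) = l s)
    (harc : ∀ s, ‖deriv l s‖ = 1) (hinj : Set.InjOn l (Set.Ico 0 L))
    (horient : ∃ z₀ : ℂ, (∀ s, l s ≠ z₀) ∧
      (∫ t in (0:ℝ)..L, deriv l t / (l t - z₀)) = 2 * (π : ℂ) * Complex.I)
    (κ : ℕ) (hκ : 2 ≤ κ) (M : ℝ) (hM : 0 < M)
    (ms mst : (N : ℕ) → Fin N → ℝ)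
    (hms : ∀ N, 2 ≤ N → ∀ i : Fin N, ms N i ∈ Set.Ico (0:ℝ) L ∧
      |ms N i - ((i : ℕ) : ℝ) * L / (N : ℝ)| ≤ M / (N : ℝ) ^ (κ + 1))
    (hmst : ∀ N, 2 ≤ N → ∀ i : Fin N, mst N i ∈ Set.Ico (0:ℝ) L ∧
      |mst N i - (((i : ℕ) : ℝ) + 1/2) * L / (N : ℝ)| ≤ M / (N : ℝ) ^ (κ + 1)) :
    ∃ C > 0, ∃ N₀ : ℕ, ∀ N : ℕ, N₀ ≤ N → ∀ z : Fin N → ℝ,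
      (l2norm (fun i => (L ^ 2 / (N : ℝ) ^ 2) *
            ((Bmat l (mst N) (ms N) * Bmat l (ms N) (mst N)
              - Amat l (mst N) (ms N) * Amat l (ms N) (mst N)).mulVec z i) + π ^ 2 * z i)
        + l2norm (fun i => (L ^ 2 / (N : ℝ) ^ 2) *
            ((Amat l (mst N) (ms N) * Bmat l (ms N) (mst N)
              + Bmat l (mst N) (ms N) * Amat l (ms N) (mst N)).mulVec z i))
        ≤ C / (N : ℝ) * l2norm z) ∧
      (l2norm (fun i => (L ^ 2 / (N : ℝ) ^ 2) *
            ((Bmat l (ms N) (mst N) * Bmat l (mst N) (ms N)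
              - Amat l (ms N) (mst N) * Amat l (mst N) (ms N)).mulVec z i) + π ^ 2 * z i)
        + l2norm (fun i => (L ^ 2 / (N : ℝ) ^ 2) *
            ((Amat l (ms N) (mst N) * Bmat l (mst N) (ms N)
              + Bmat l (ms N) (mst N) * Amat l (mst N) (ms N)).mulVec z i))
        ≤ C / (N : ℝ) * l2norm z) := by
  exact discretized_poincare_bertrand_general L hL l (mod_cast contDiff_infty.1 hsm 4) hper
    (fun s => norm_ne_zero_iff.1 (harc s ▸ one_ne_zero)) hinj κ hκ M ms mst
    (fun N hN i => (hms N hN i).2) fun N hN i => (hmst N hN i).2
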